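/- arXiv:1004.0723 — 3 statements merged into one kernel-verified Lean document; each statement's English description precedes it below -/
import Mathlib

section
/- Let {T₁(s)}_{s≥0} and {T₂(s)}_{s≥0} be two strongly continuous one-parameter semigroups of contractions on a complex Hilbert space H such that T₁(s)T₂(t) = T₂(t)T₁(s) for all s,t ≥ 0. Then there exist a complex Hilbert space K containing H (via an isometric embedding) and two strongly continuous one-parameter semigroups of isometries {V₁(s)}_{s≥0} and {V₂(s)}_{s≥0} on K with V₁(s)V₂(t) = V₂(t)V₁(s) for all s,t ≥ 0, such that for all s,t ≥ 0, T₁(s)T₂(t) = P_H V₁(s)V₂(t)|_H, where P_H denotes the orthogonal projection of K onto H. Moreover K, {V₁(s)}, {V₂(s)} can be chosen minimal in the sense that K is the closed linear span of {V₁(s)V₂(t)h : s,t ≥ 0, h ∈ H}. -/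
open ContinuousLinearMap
open Filter Topology
open scoped InnerProductSpace NNReal

theorem ContinuousLinearMap.exists_defect {H : Type*} [NormedAddCommGroup H]
    [InnerProductSpace ℂ H] [CompleteSpace H] (T : H →L[ℂ] H) (hT : ‖T‖ ≤ 1) :
    ∃ D : H →L[ℂ] H, ∀ h, ‖D h‖ ^ 2 + ‖T h‖ ^ 2 = ‖h‖ ^ 2 := by
  have h0 : 0 ≤ 1 - adjoint T ∘L T := by
    rw [ContinuousLinearMap.nonneg_iff_isPositive]
    refine ⟨?_, fun x => ?_⟩
    · intro x y
      simp [inner_sub_left, inner_sub_right, adjoint_inner_left, adjoint_inner_right]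
    · have h1 : ‖T x‖ ≤ ‖x‖ := by simpa using T.le_of_opNorm_le hT x
      have h2 : ‖T x‖ ^ 2 ≤ ‖x‖ ^ 2 := by gcongr
      simp only [reApplyInnerSelf_apply, sub_apply, one_apply_eq_self, comp_apply,
        inner_sub_left, adjoint_inner_left, map_sub, inner_self_eq_norm_sq]
      linarith
  obtain ⟨D, hD⟩ := CStarAlgebra.nonneg_iff_eq_star_mul_self.1 h0
  refine ⟨D, fun h => ?_⟩
  have h1 := congrArg (fun A : H →L[ℂ] H => RCLike.re ⟪A h, h⟫_ℂ) hD
  simp only [star_eq_adjoint, mul_apply_eq_comp, sub_apply, one_apply_eq_self, comp_apply,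
    inner_sub_left, adjoint_inner_left, map_sub, inner_self_eq_norm_sq] at h1
  linarith

theorem exists_partialIsometry {H E : Type*} [NormedAddCommGroup H] [InnerProductSpace ℂ H]
    [NormedAddCommGroup E] [InnerProductSpace ℂ E] [CompleteSpace E]
    (A B : H →L[ℂ] E) (hAB : ∀ h, ‖A h‖ = ‖B h‖) :
    ∃ u : E →L[ℂ] E, (∀ x, u (adjoint u (u x)) = u x) ∧ (∀ h, u (A h) = B h) ∧
      ∀ h, adjoint u (B h) = A h := by
  let M : Submodule ℂ E := (LinearMap.range A.toLinearMap).topologicalClosure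
  have hAM : ∀ h, A h ∈ M := fun h => Submodule.le_topologicalClosure _ ⟨h, rfl⟩
  have : CompleteSpace M := (Submodule.isClosed_topologicalClosure _).completeSpace_coe
  let e : H →ₗ[ℂ] M := A.toLinearMap.codRestrict M hAM
  have he : DenseRange e := by
    rw [DenseRange, Subtype.dense_iff]
    intro x hx
    refine closure_mono ?_ hx
    rintro _ ⟨h, rfl⟩
    exact ⟨e h, ⟨h, rfl⟩, rfl⟩
  let w : M →L[ℂ] E := B.toLinearMap.extendOfNorm e
  have hw : ∀ h, w (e h) = B h :=
    LinearMap.extendOfNorm_eq he ⟨1, fun h => by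
      rw [one_mul]
      exact (hAB h).ge⟩
  have hwn : ∀ x, ‖w x‖ = ‖x‖ := fun x => by
    refine he.induction_on (p := fun k => ‖w k‖ = ‖k‖) x
      (isClosed_eq (by fun_prop) (by fun_prop)) fun h => ?_
    rw [hw]
    exact (hAB h).symm
  have hww : ∀ x y, ⟪w x, w y⟫_ℂ = ⟪x, y⟫_ℂ :=
    (⟨w.toLinearMap, hwn⟩ : M →ₗᵢ[ℂ] E).inner_map_map
  let u : E →L[ℂ] E := w ∘L M.orthogonalProjectionOnto
  have huu : ∀ x, adjoint u (u x) = M.orthogonalProjectionOnto x := by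
    intro x
    refine ext_inner_right ℂ fun y => ?_
    rw [adjoint_inner_left]
    simp only [u, comp_apply, hww]
    rw [Submodule.inner_orthogonalProjectionOnto_eq_of_mem_left]
  have huA : ∀ h, u (A h) = B h := by
    intro h
    have : M.orthogonalProjectionOnto (A h) = e h :=
      Submodule.orthogonalProjectionOnto_mem_subspace_eq_self (e h)
    simp [u, this, hw]
  refine ⟨u, fun x => ?_, huA, fun h => ?_⟩
  · rw [huu]
    simp only [u, comp_apply, Submodule.orthogonalProjectionOnto_mem_subspace_eq_self]
  · rw [← huA, huu]
    exact congrArg Subtype.val (Submodule.orthogonalProjectionOnto_mem_subspace_eq_self (e h))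

/-- The Julia (Halmos) block operator of a partial isometry `u` with adjoint `v`; it is unitary. -/
def LinearMap.julia {E : Type*} [NormedAddCommGroup E] [InnerProductSpace ℂ E]
    (u v : E →ₗ[ℂ] E) : WithLp 2 (E × E) →ₗ[ℂ] WithLp 2 (E × E) where
  toFun x := WithLp.toLp 2 (u x.fst + x.snd - u (v x.snd), x.fst - v (u x.fst) - v x.snd)
  map_add' x y := by
    apply WithLp.ofLp_injective
    ext <;> simp <;> abel
  map_smul' c x := by
    apply WithLp.ofLp_injective
    ext <;> simp [smul_sub, smul_add]

theorem LinearMap.julia_apply_julia {E : Type*} [NormedAddCommGroup E] [InnerProductSpace ℂ E]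
    {u v : E →ₗ[ℂ] E} (hu : ∀ x, u (v (u x)) = u x) (hv : ∀ x, v (u (v x)) = v x)
    (x : WithLp 2 (E × E)) : julia v u (julia u v x) = x := by
  apply WithLp.ofLp_injective
  ext
  · simp [julia, hu, hv]
    abel
  · simp [julia, hu, hv]
    abel

theorem LinearMap.inner_julia_left {E : Type*} [NormedAddCommGroup E] [InnerProductSpace ℂ E]
    {u v : E →ₗ[ℂ] E} (huv : ∀ x y, ⟪u x, y⟫_ℂ = ⟪x, v y⟫_ℂ) (hvu : ∀ x y, ⟪v x, y⟫_ℂ = ⟪x, u y⟫_ℂ)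
    (x y : WithLp 2 (E × E)) : ⟪julia u v x, y⟫_ℂ = ⟪x, julia v u y⟫_ℂ := by
  simp only [WithLp.prod_inner_apply, julia, LinearMap.coe_mk, AddHom.coe_mk, WithLp.ofLp_fst,
    WithLp.ofLp_snd, inner_add_left, inner_sub_left, inner_add_right, inner_sub_right, huv, hvu]
  ring

theorem exists_unitary_of_norm_eq {H E : Type*} [NormedAddCommGroup H] [InnerProductSpace ℂ H]
    [NormedAddCommGroup E] [InnerProductSpace ℂ E] [CompleteSpace E]
    (A B : H →L[ℂ] E) (hAB : ∀ h, ‖A h‖ = ‖B h‖) :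
    ∃ G : WithLp 2 (E × E) ≃ₗᵢ[ℂ] WithLp 2 (E × E),
      ∀ h, G (WithLp.toLp 2 (A h, 0)) = WithLp.toLp 2 (B h, 0) := by
  obtain ⟨u, hu, huA, huB⟩ := exists_partialIsometry A B hAB
  have hu' : ∀ x, adjoint u (u (adjoint u x)) = adjoint u x := by
    intro x
    refine ext_inner_right ℂ fun y => ?_
    rw [adjoint_inner_left, ← adjoint_inner_right u, adjoint_inner_left, hu, adjoint_inner_left]
  let U : E →ₗ[ℂ] E := u.toLinearMap
  let V : E →ₗ[ℂ] E := (adjoint u).toLinearMap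
  have hUV : ∀ x, LinearMap.julia V U (LinearMap.julia U V x) = x :=
    LinearMap.julia_apply_julia hu hu'
  have hVU : ∀ x, LinearMap.julia U V (LinearMap.julia V U x) = x :=
    LinearMap.julia_apply_julia hu' hu
  refine ⟨⟨LinearEquiv.ofLinearMap (LinearMap.julia U V) (LinearMap.julia V U) (LinearMap.ext hVU)
    (LinearMap.ext hUV), fun x => ?_⟩, fun h => ?_⟩
  · have h1 : ⟪LinearMap.julia U V x, LinearMap.julia U V x⟫_ℂ = ⟪x, x⟫_ℂ := by
      rw [LinearMap.inner_julia_left, hUV]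
      · exact fun x y => (adjoint_inner_right u x y).symm
      · exact fun x y => adjoint_inner_left u y x
    change ‖LinearMap.julia U V x‖ = ‖x‖
    rw [@norm_eq_sqrt_re_inner ℂ, h1, ← norm_eq_sqrt_re_inner]
  · change LinearMap.julia U V _ = _
    simp [LinearMap.julia, U, V, huA, huB]

theorem memℓp_two_iff {L : Type*} [NormedAddCommGroup L] {f : ℕ → L} :
    Memℓp f 2 ↔ Summable fun n => ‖f n‖ ^ 2 := by
  simpa using memℓp_gen_iff (f := f) (p := 2) (by norm_num)

theorem lp.hasSum_norm_sq {L : Type*} [NormedAddCommGroup L]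
    (f : lp (fun _ : ℕ => L) 2) : HasSum (fun n => ‖f n‖ ^ 2) (‖f‖ ^ 2) := by
  simpa using lp.hasSum_norm (p := 2) (by norm_num) f

theorem WithLp.prod_norm_sq_eq {E F : Type*} [NormedAddCommGroup E] [NormedAddCommGroup F]
    (x : WithLp 2 (E × F)) : ‖x‖ ^ 2 = ‖x.fst‖ ^ 2 + ‖x.snd‖ ^ 2 :=
  WithLp.prod_norm_sq_eq_of_L2 x

theorem exists_shift_isometry {H L : Type*} [NormedAddCommGroup H] [InnerProductSpace ℂ H]
    [NormedAddCommGroup L] [InnerProductSpace ℂ L] (T : H →ₗ[ℂ] H) (c : H →ₗ[ℂ] L)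
    (P Q : L →ₗ[ℂ] L) (horth : ∀ a b, ‖P a + Q b‖ ^ 2 = ‖P a‖ ^ 2 + ‖Q b‖ ^ 2)
    (hPQ : ∀ a, ‖P a‖ ^ 2 + ‖Q a‖ ^ 2 = ‖a‖ ^ 2) (hc : ∀ h, Q (c h) = c h)
    (hT : ∀ h, ‖c h‖ ^ 2 + ‖T h‖ ^ 2 = ‖h‖ ^ 2) :
    ∃ W : WithLp 2 (H × lp (fun _ : ℕ => L) 2) →ₗᵢ[ℂ] WithLp 2 (H × lp (fun _ : ℕ => L) 2),
      ∀ k, (W k).fst = T k.fst ∧ (W k).snd 0 = P (k.snd 0) + c k.fst ∧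
        ∀ n, (W k).snd (n + 1) = P (k.snd (n + 1)) + Q (k.snd n) := by
  let w : H → (ℕ → L) → ℕ → L := fun h f n =>
    P (f n) + Nat.casesOn n (c h) fun m => Q (f m)
  have hw₀ : ∀ h f, w h f 0 = P (f 0) + c h := fun h f => rfl
  have hws : ∀ h f n, w h f (n + 1) = P (f (n + 1)) + Q (f n) := fun h f n => rfl
  have hw : ∀ h (f : lp (fun _ : ℕ => L) 2),
      HasSum (fun n => ‖w h f n‖ ^ 2) (‖f‖ ^ 2 + ‖c h‖ ^ 2) := by
    intro h f
    have hf := lp.hasSum_norm_sq f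
    have hsP : Summable fun n => ‖P (f n)‖ ^ 2 :=
      hf.summable.of_nonneg_of_le (fun n => by positivity)
        fun n => (le_add_of_nonneg_right (by positivity)).trans (hPQ (f n)).le
    have hsQ : Summable fun n => ‖Q (f n)‖ ^ 2 :=
      hf.summable.of_nonneg_of_le (fun n => by positivity)
        fun n => (le_add_of_nonneg_left (by positivity)).trans (hPQ (f n)).le
    have hsum : (∑' n, ‖P (f n)‖ ^ 2) + (∑' n, ‖Q (f n)‖ ^ 2) = ‖f‖ ^ 2 :=
      (hsP.hasSum.add hsQ.hasSum).unique (by simpa only [hPQ] using hf)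
    let g : ℕ → ℝ := fun n => Nat.casesOn n (‖c h‖ ^ 2) fun m => ‖Q (f m)‖ ^ 2
    have hg : HasSum g (‖c h‖ ^ 2 + ∑' n, ‖Q (f n)‖ ^ 2) := by
      rw [add_comm]
      exact (hasSum_nat_add_iff (f := g) 1).1 (by simpa [g] using hsQ.hasSum) |> fun h => by
        simpa [g] using h
    have := hsP.hasSum.add hg
    rw [show ‖f‖ ^ 2 + ‖c h‖ ^ 2 =
      (∑' n, ‖P (f n)‖ ^ 2) + (‖c h‖ ^ 2 + ∑' n, ‖Q (f n)‖ ^ 2) by rw [← hsum]; ring]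
    convert this using 2 with n
    cases n with
    | zero => exact (hc h ▸ horth (f 0) (c h) :)
    | succ n => exact horth (f (n + 1)) (f n)
  let S : WithLp 2 (H × lp (fun _ : ℕ => L) 2) →ₗ[ℂ] WithLp 2 (H × lp (fun _ : ℕ => L) 2) :=
    { toFun := fun k => WithLp.toLp 2 (T k.fst, ⟨w k.fst k.snd, memℓp_two_iff.2 (hw _ _).summable⟩)
      map_add' := fun x y => by
        apply WithLp.ofLp_injective
        ext n
        · simp
        · change w (x.fst + y.fst) (⇑x.snd + ⇑y.snd) n = w x.fst x.snd n + w y.fst y.snd n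
          cases n <;> simp only [hw₀, hws, Pi.add_apply, map_add] <;> abel
      map_smul' := fun r x => by
        apply WithLp.ofLp_injective
        ext n
        · simp
        · change w (r • x.fst) (r • ⇑x.snd) n = r • w x.fst x.snd n
          cases n <;> simp only [hw₀, hws, Pi.smul_apply, map_smul, smul_add] }
  refine ⟨⟨S, fun k => ?_⟩, fun k => ⟨rfl, rfl, fun n => rfl⟩⟩
  rw [← sq_eq_sq₀ (norm_nonneg _) (norm_nonneg _), WithLp.prod_norm_sq_eq, WithLp.prod_norm_sq_eq,
    (lp.hasSum_norm_sq (S k).snd).unique (hw k.fst k.snd), ← hT k.fst]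
  change ‖T k.fst‖ ^ 2 + _ = _
  ring

theorem WithLp.prod_lp_ext {H L : Type*} [NormedAddCommGroup H] [NormedAddCommGroup L]
    {x y : WithLp 2 (H × lp (fun _ : ℕ => L) 2)} (hfst : x.fst = y.fst)
    (hsnd : ∀ n, x.snd n = y.snd n) : x = y :=
  WithLp.ofLp_injective 2 (Prod.ext hfst (lp.ext (funext hsnd)))

theorem exists_diagonal_isometry {H L : Type*} [NormedAddCommGroup H] [InnerProductSpace ℂ H]
    [NormedAddCommGroup L] [InnerProductSpace ℂ L] (G : L →ₗᵢ[ℂ] L) :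
    ∃ U : WithLp 2 (H × lp (fun _ : ℕ => L) 2) →ₗᵢ[ℂ] WithLp 2 (H × lp (fun _ : ℕ => L) 2),
      ∀ k, (U k).fst = k.fst ∧ ∀ n, (U k).snd n = G (k.snd n) := by
  obtain ⟨U, hU⟩ := exists_shift_isometry (LinearMap.id : H →ₗ[ℂ] H) 0 G.toLinearMap 0
    (by simp) (by simp) (by simp) (by simp)
  refine ⟨U, fun k => ⟨(hU k).1, fun n => ?_⟩⟩
  cases n with
  | zero => simpa using (hU k).2.1
  | succ n => simpa using (hU k).2.2 n

theorem exists_commuting_isometries {H L : Type*} [NormedAddCommGroup H] [InnerProductSpace ℂ H]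
    [NormedAddCommGroup L] [InnerProductSpace ℂ L] (T₁ T₂ : H →ₗ[ℂ] H)
    (hT : ∀ h, T₁ (T₂ h) = T₂ (T₁ h)) (c₁ c₂ : H →ₗ[ℂ] L)
    (P Q : L →ₗ[ℂ] L) (horth : ∀ a b, ‖P a + Q b‖ ^ 2 = ‖P a‖ ^ 2 + ‖Q b‖ ^ 2)
    (hadd : ∀ a, P a + Q a = a) (hPP : ∀ a, P (P a) = P a) (hQQ : ∀ a, Q (Q a) = Q a)
    (hPQ : ∀ a, P (Q a) = 0) (hQP : ∀ a, Q (P a) = 0)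
    (hc₁ : ∀ h, Q (c₁ h) = c₁ h) (hc₂ : ∀ h, P (c₂ h) = c₂ h)
    (hT₁ : ∀ h, ‖c₁ h‖ ^ 2 + ‖T₁ h‖ ^ 2 = ‖h‖ ^ 2) (hT₂ : ∀ h, ‖c₂ h‖ ^ 2 + ‖T₂ h‖ ^ 2 = ‖h‖ ^ 2)
    (G : L ≃ₗᵢ[ℂ] L) (hG : ∀ h, G (c₂ h + c₁ (T₂ h)) = c₁ h + c₂ (T₁ h)) :
    ∃ V₁ V₂ : WithLp 2 (H × lp (fun _ : ℕ => L) 2) →ₗᵢ[ℂ] WithLp 2 (H × lp (fun _ : ℕ => L) 2),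
      (∀ k, V₁ (V₂ k) = V₂ (V₁ k)) ∧ (∀ k, (V₁ k).fst = T₁ k.fst) ∧
        ∀ k, (V₂ k).fst = T₂ k.fst := by
  have hnorm : ∀ a, ‖P a‖ ^ 2 + ‖Q a‖ ^ 2 = ‖a‖ ^ 2 := fun a => by rw [← horth, hadd]
  obtain ⟨W₁, hW₁⟩ := exists_shift_isometry T₁ c₁ P Q horth hnorm hc₁ hT₁
  obtain ⟨W₂, hW₂⟩ := exists_shift_isometry T₂ c₂ Q P
    (fun a b => by rw [add_comm, horth, add_comm]) (fun a => by rw [add_comm, hnorm]) hc₂ hT₂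
  obtain ⟨U, hU⟩ := exists_diagonal_isometry (H := H) G.toLinearIsometry
  obtain ⟨U', hU'⟩ := exists_diagonal_isometry (H := H) G.symm.toLinearIsometry
  have hP₁ : ∀ h, P (c₁ h) = 0 := fun h => by rw [← hc₁, hPQ]
  have hQ₂ : ∀ h, Q (c₂ h) = 0 := fun h => by rw [← hc₂, hQP]
  have hU'U : ∀ k, U' (U k) = k := fun k =>
    WithLp.prod_lp_ext (by rw [(hU' _).1, (hU k).1]) fun n => by
      rw [(hU' _).2, (hU k).2]
      exact G.symm_apply_apply _
  have hWW : ∀ k, U (W₁ (W₂ (U' k))) = W₂ (W₁ k) := by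
    intro k
    refine WithLp.prod_lp_ext ?_ fun n => ?_
    · rw [(hU _).1, (hW₁ _).1, (hW₂ _).1, (hU' _).1, (hW₂ _).1, (hW₁ _).1, hT]
    · rw [(hU _).2]
      change G _ = _
      cases n with
      | zero =>
        rw [(hW₁ _).2.1, (hW₂ _).2.1, (hW₂ _).2.1, (hW₁ _).2.1, (hW₂ _).1, (hW₁ _).1, (hU' _).1]
        simp only [map_add P, map_add Q, hPQ, hQP, hc₁, hc₂, zero_add, hG]
      | succ n =>
        have hk : P (G.symm (k.snd n)) + Q (G.symm (k.snd n)) = G.symm (k.snd n) := hadd _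
        have hL : (W₁ (W₂ (U' k))).snd (n + 1) = G.symm (k.snd n) := by
          rw [(hW₁ _).2.2, (hW₂ _).2.2, (hU' _).2]
          cases n with
          | zero =>
            rw [(hW₂ _).2.1, (hU' _).2]
            simpa [hPQ, hPP, hQQ, hQ₂] using hk
          | succ n =>
            rw [(hW₂ _).2.2, (hU' _).2, (hU' _).2]
            simpa [hPQ, hPP, hQQ, hQP] using hk
        rw [hL, G.apply_symm_apply, (hW₂ _).2.2, (hW₁ _).2.2]
        cases n with
        | zero =>
          rw [(hW₁ _).2.1]
          simp [hPP, hQP, hQQ, hP₁, add_comm (Q _), hadd]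
        | succ n =>
          rw [(hW₁ _).2.2]
          simp [hPP, hPQ, hQP, hQQ, add_comm (Q _), hadd]
  refine ⟨U.comp W₁, W₂.comp U', fun k => ?_, fun k => ?_, fun k => ?_⟩
  · change U (W₁ (W₂ (U' k))) = W₂ (U' (U (W₁ k)))
    rw [hWW, hU'U]
  · change (U (W₁ k)).fst = _
    rw [(hU _).1, (hW₁ _).1]
  · change (W₂ (U' k)).fst = _
    rw [(hW₂ _).1, (hU' _).1]

theorem exists_hilbert_space_of_bounded_linearMaps {X 𝒦 : Type} [AddCommGroup X] [Module ℂ X]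
    [NormedAddCommGroup 𝒦] [InnerProductSpace ℂ 𝒦] (l : Ultrafilter ℕ) (Φ : ℕ → X →ₗ[ℂ] 𝒦)
    (hΦ : ∀ x, ∃ C, ∀ n, ‖Φ n x‖ ≤ C) :
    ∃ (K : Type) (_ : NormedAddCommGroup K) (_ : InnerProductSpace ℂ K) (_ : CompleteSpace K)
      (e : X →ₗ[ℂ] K), DenseRange e ∧
      ∀ x y, Tendsto (fun n => ⟪Φ n x, Φ n y⟫_ℂ) l (𝓝 ⟪e x, e y⟫_ℂ) := by
  have hlim : ∀ x y, ∃ z, Tendsto (fun n => ⟪Φ n x, Φ n y⟫_ℂ) l (𝓝 z) := by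
    intro x y
    obtain ⟨C, hC⟩ := hΦ x
    obtain ⟨D, hD⟩ := hΦ y
    have hmem : ∀ n, ⟪Φ n x, Φ n y⟫_ℂ ∈ Metric.closedBall (0 : ℂ) (C * D) := by
      intro n
      rw [mem_closedBall_zero_iff]
      exact (norm_inner_le_norm _ _).trans (mul_le_mul (hC n) (hD n) (norm_nonneg _)
        ((norm_nonneg _).trans (hC n)))
    obtain ⟨z, -, hz⟩ := (isCompact_closedBall (0 : ℂ) (C * D)).ultrafilter_le_nhds
      (l.map fun n => ⟪Φ n x, Φ n y⟫_ℂ) (le_principal_iff.2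
        (mem_map.2 (Eventually.of_forall hmem)))
    exact ⟨z, hz⟩
  choose B hB using hlim
  let c : PreInnerProductSpace.Core ℂ X :=
    { inner := B
      conj_inner_symm := fun x y => tendsto_nhds_unique
        (((continuous_star.tendsto _).comp (hB y x)).congr fun n => inner_conj_symm _ _) (hB x y)
      re_inner_nonneg := fun x => ge_of_tendsto ((Complex.continuous_re.tendsto _).comp (hB x x))
        (Eventually.of_forall fun n => inner_self_nonneg (𝕜 := ℂ))
      add_left := fun x y z => tendsto_nhds_unique (hB (x + y) z)
        (((hB x z).add (hB y z)).congr fun n => by rw [map_add, inner_add_left])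
      smul_left := fun x y r => tendsto_nhds_unique (hB (r • x) y)
        (((hB x y).const_mul _).congr fun n => by rw [map_smul, inner_smul_left]) }
  let : SeminormedAddCommGroup X := InnerProductSpace.Core.toSeminormedAddCommGroup (c := c)
  let : InnerProductSpace ℂ X := InnerProductSpace.ofCore c
  refine ⟨UniformSpace.Completion X, inferInstance, inferInstance, inferInstance,
    (UniformSpace.Completion.toComplₗᵢ : X →ₗᵢ[ℂ] UniformSpace.Completion X).toLinearMap,
    UniformSpace.Completion.denseRange_coe, ?_⟩
  intro x y
  have h := UniformSpace.Completion.inner_coe (𝕜 := ℂ) x y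
  change Tendsto _ _ (𝓝 ⟪(x : UniformSpace.Completion X), (y : UniformSpace.Completion X)⟫_ℂ)
  rw [h]
  exact hB x y

theorem LinearIsometry.exists_extend {X K : Type*} [AddCommGroup X] [Module ℂ X]
    [NormedAddCommGroup K] [InnerProductSpace ℂ K] [CompleteSpace K] {e : X →ₗ[ℂ] K}
    (he : DenseRange e) (f : X →ₗ[ℂ] K) (hf : ∀ x, ‖f x‖ = ‖e x‖) :
    ∃ V : K →ₗᵢ[ℂ] K, ∀ x, V (e x) = f x := by
  have hE : ∀ x, f.extendOfNorm e (e x) = f x :=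
    LinearMap.extendOfNorm_eq he ⟨1, fun x => by rw [hf, one_mul]⟩
  refine ⟨⟨(f.extendOfNorm e).toLinearMap, fun k => ?_⟩, hE⟩
  refine he.induction_on (p := fun k => ‖f.extendOfNorm e k‖ = ‖k‖) k
    (isClosed_eq (by fun_prop) (by fun_prop)) fun x => ?_
  rw [hE, hf]

theorem exists_isometric_dilation_of_tendsto {M H 𝒦 : Type} [AddCommMonoid M]
    [NormedAddCommGroup H] [InnerProductSpace ℂ H] [NormedAddCommGroup 𝒦] [InnerProductSpace ℂ 𝒦]
    (j : H →ₗᵢ[ℂ] 𝒦) (W : ℕ → M → 𝒦 →ₗᵢ[ℂ] 𝒦) (S : M → H → H)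
    (hW₀ : ∀ n, W n 0 = LinearIsometry.id)
    (hWadd : ∀ p q h, Tendsto (fun n => W n (p + q) (j h) - W n p (W n q (j h))) atTop (𝓝 0))
    (hWS : ∀ p h h', Tendsto (fun n => ⟪j h', W n p (j h)⟫_ℂ) atTop (𝓝 ⟪h', S p h⟫_ℂ)) :
    ∃ (K : Type) (_ : NormedAddCommGroup K) (_ : InnerProductSpace ℂ K) (_ : CompleteSpace K)
      (ι : H →ₗᵢ[ℂ] K) (V : M → K →ₗᵢ[ℂ] K),
      V 0 = LinearIsometry.id ∧ (∀ p q, V (p + q) = (V p).comp (V q)) ∧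
      (∀ p h h', ⟪ι h', V p (ι h)⟫_ℂ = ⟪h', S p h⟫_ℂ) ∧
      (Submodule.span ℂ {x : K | ∃ p h, x = V p (ι h)}).topologicalClosure = ⊤ := by
  let l := hyperfilter ℕ
  have hl : (l : Filter ℕ) ≤ atTop := Nat.hyperfilter_le_atTop
  let Φ : ℕ → (M →₀ H) →ₗ[ℂ] 𝒦 := fun n =>
    Finsupp.lsum ℂ fun p => (W n p).toLinearMap ∘ₗ j.toLinearMap
  have hΦ : ∀ n p h, Φ n (Finsupp.single p h) = W n p (j h) := by
    intro n p h
    simp [Φ]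
  obtain ⟨K, _, _, _, e, he, hlim⟩ := exists_hilbert_space_of_bounded_linearMaps l Φ (by
    intro x
    induction x using Finsupp.induction_linear with
    | zero => exact ⟨0, by simp⟩
    | add f g hf hg =>
      obtain ⟨C, hC⟩ := hf
      obtain ⟨D, hD⟩ := hg
      exact ⟨C + D, fun n => by
        rw [map_add]
        exact norm_add_le_of_le (hC n) (hD n)⟩
    | single p h => exact ⟨‖h‖, fun n => by simp [hΦ]⟩)
  have hnorm : ∀ x, Tendsto (fun n => ‖Φ n x‖) l (𝓝 ‖e x‖) := by
    intro x
    have h := (Complex.continuous_re.tendsto _).comp (hlim x x)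
    have h2 := (Real.continuous_sqrt.tendsto _).comp h
    simp only [Function.comp_def] at h2
    convert h2 using 2
    · exact norm_eq_sqrt_re_inner (𝕜 := ℂ) _
    · exact norm_eq_sqrt_re_inner (𝕜 := ℂ) _
  let σ : M → (M →₀ H) →ₗ[ℂ] (M →₀ H) := fun p => Finsupp.lmapDomain H ℂ (p + ·)
  have hσ : ∀ p q h, σ p (Finsupp.single q h) = Finsupp.single (p + q) h := by
    intro p q h
    simp [σ]
  have hσΦ : ∀ p x, Tendsto (fun n => Φ n (σ p x) - W n p (Φ n x)) atTop (𝓝 0) := by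
    intro p x
    induction x using Finsupp.induction_linear with
    | zero => simp
    | add f g hf hg =>
      have := hf.add hg
      rw [add_zero] at this
      refine this.congr fun n => ?_
      simp only [map_add]
      abel
    | single q h => simpa only [hσ, hΦ] using hWadd p q h
  have hσe : ∀ p x, ‖e (σ p x)‖ = ‖e x‖ := by
    intro p x
    have h1 := ((hσΦ p x).mono_left hl).norm
    rw [norm_zero] at h1
    have h2 : Tendsto (fun n => ‖Φ n (σ p x)‖ - ‖Φ n x‖) l (𝓝 0) := by
      refine squeeze_zero_norm (fun n => ?_) h1
      have := abs_norm_sub_norm_le (Φ n (σ p x)) (W n p (Φ n x))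
      rwa [LinearIsometry.norm_map] at this
    exact sub_eq_zero.1 (tendsto_nhds_unique ((hnorm (σ p x)).sub (hnorm x)) h2)
  choose V hV using fun p => LinearIsometry.exists_extend he (e ∘ₗ σ p) (hσe p)
  have hVs : ∀ p q h, V p (e (Finsupp.single q h)) = e (Finsupp.single (p + q) h) := by
    intro p q h
    rw [hV, LinearMap.comp_apply, hσ]
  have hext : ∀ {U U' : K →ₗᵢ[ℂ] K}, (∀ q h, U (e (Finsupp.single q h)) =
      U' (e (Finsupp.single q h))) → U = U' := by
    intro U U' h
    have h1 : U.toLinearMap ∘ₗ e = U'.toLinearMap ∘ₗ e := Finsupp.lhom_ext h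
    exact LinearIsometry.ext fun k => congrFun (he.equalizer U.continuous U'.continuous
      (funext fun x => LinearMap.congr_fun h1 x)) k
  have hι : ∀ h, ‖(e ∘ₗ Finsupp.lsingle 0) h‖ = ‖h‖ := by
    intro h
    refine tendsto_nhds_unique (hnorm (Finsupp.single 0 h)) (tendsto_const_nhds.congr fun n => ?_)
    simp [hΦ]
  have hVι : ∀ p h, V p (e (Finsupp.single 0 h)) = e (Finsupp.single p h) := by
    intro p h
    rw [hVs, add_zero]
  refine ⟨K, inferInstance, inferInstance, inferInstance, ⟨e ∘ₗ Finsupp.lsingle 0, hι⟩, V,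
    hext fun q h => ?_, fun p q => hext fun r h => ?_, fun p h h' => ?_, ?_⟩
  · simp [hVs]
  · simp [hVs, add_assoc]
  · change ⟪e (Finsupp.single 0 h'), V p (e (Finsupp.single 0 h))⟫_ℂ = _
    rw [hVι]
    refine tendsto_nhds_unique (hlim _ _) (((hWS p h h').mono_left hl).congr fun n => ?_)
    simp [hΦ, hW₀]
  · have hr : LinearMap.range e ≤ Submodule.span ℂ {x : K | ∃ p h, x = V p
        ((⟨e ∘ₗ Finsupp.lsingle 0, hι⟩ : H →ₗᵢ[ℂ] K) h)} := by
      rintro _ ⟨x, rfl⟩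
      induction x using Finsupp.induction_linear with
      | zero => simp
      | add f g hf hg =>
        rw [map_add]
        exact add_mem hf hg
      | single p h => exact Submodule.subset_span ⟨p, h, (hVι p h).symm⟩
    refine top_unique fun k _ => ?_
    exact closure_mono (SetLike.coe_subset_coe.2 hr) (he k)

/-- The space `H ⊕ ℓ²(H⁴)` on which Ando's dilation of two commuting contractions acts. -/
abbrev AndoSpace (H : Type*) [NormedAddCommGroup H] [InnerProductSpace ℂ H] : Type _ :=
  WithLp 2 (H × lp (fun _ : ℕ => WithLp 2 (WithLp 2 (H × H) × WithLp 2 (H × H))) 2)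

theorem exists_ando_isometries {H : Type*} [NormedAddCommGroup H] [InnerProductSpace ℂ H]
    [CompleteSpace H] (T₁ T₂ : H →L[ℂ] H) (hT₁ : ‖T₁‖ ≤ 1) (hT₂ : ‖T₂‖ ≤ 1)
    (hT : ∀ h, T₁ (T₂ h) = T₂ (T₁ h)) :
    ∃ V₁ V₂ : AndoSpace H →ₗᵢ[ℂ] AndoSpace H, (∀ k, V₁ (V₂ k) = V₂ (V₁ k)) ∧
      (∀ k, (V₁ k).fst = T₁ k.fst) ∧ ∀ k, (V₂ k).fst = T₂ k.fst := by
  obtain ⟨D₁, hD₁⟩ := T₁.exists_defect hT₁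
  obtain ⟨D₂, hD₂⟩ := T₂.exists_defect hT₂
  let A : H →L[ℂ] WithLp 2 (H × H) :=
    (WithLp.prodContinuousLinearEquiv 2 ℂ H H).symm.toContinuousLinearMap ∘L D₂.prod (D₁ ∘L T₂)
  let B : H →L[ℂ] WithLp 2 (H × H) :=
    (WithLp.prodContinuousLinearEquiv 2 ℂ H H).symm.toContinuousLinearMap ∘L (D₂ ∘L T₁).prod D₁
  have hA : ∀ h, A h = WithLp.toLp 2 (D₂ h, D₁ (T₂ h)) := fun h => rfl
  have hB : ∀ h, B h = WithLp.toLp 2 (D₂ (T₁ h), D₁ h) := fun h => rfl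
  have hAB : ∀ h, ‖A h‖ = ‖B h‖ := by
    intro h
    rw [← sq_eq_sq₀ (norm_nonneg _) (norm_nonneg _), hA, hB, WithLp.prod_norm_sq_eq,
      WithLp.prod_norm_sq_eq]
    have h₁ := hD₁ h
    have h₂ := hD₂ h
    have h₃ := hD₁ (T₂ h)
    have h₄ := hD₂ (T₁ h)
    rw [hT] at h₃
    change ‖D₂ h‖ ^ 2 + ‖D₁ (T₂ h)‖ ^ 2 = ‖D₂ (T₁ h)‖ ^ 2 + ‖D₁ h‖ ^ 2
    linarith
  obtain ⟨G, hG⟩ := exists_unitary_of_norm_eq A B hAB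
  let P : WithLp 2 (WithLp 2 (H × H) × WithLp 2 (H × H)) →ₗ[ℂ]
      WithLp 2 (WithLp 2 (H × H) × WithLp 2 (H × H)) :=
    { toFun := fun l => WithLp.toLp 2 (WithLp.toLp 2 (l.fst.fst, 0), l.snd)
      map_add' := fun x y => by
        apply WithLp.ofLp_injective
        refine Prod.ext (WithLp.ofLp_injective 2 (Prod.ext ?_ ?_)) ?_ <;> simp
      map_smul' := fun r x => by
        apply WithLp.ofLp_injective
        refine Prod.ext (WithLp.ofLp_injective 2 (Prod.ext ?_ ?_)) ?_ <;> simp }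
  let Q : WithLp 2 (WithLp 2 (H × H) × WithLp 2 (H × H)) →ₗ[ℂ]
      WithLp 2 (WithLp 2 (H × H) × WithLp 2 (H × H)) :=
    { toFun := fun l => WithLp.toLp 2 (WithLp.toLp 2 (0, l.fst.snd), 0)
      map_add' := fun x y => by
        apply WithLp.ofLp_injective
        refine Prod.ext (WithLp.ofLp_injective 2 (Prod.ext ?_ ?_)) ?_ <;> simp
      map_smul' := fun r x => by
        apply WithLp.ofLp_injective
        refine Prod.ext (WithLp.ofLp_injective 2 (Prod.ext ?_ ?_)) ?_ <;> simp }
  let c₁ : H →ₗ[ℂ] WithLp 2 (WithLp 2 (H × H) × WithLp 2 (H × H)) :=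
    { toFun := fun h => WithLp.toLp 2 (WithLp.toLp 2 (0, D₁ h), 0)
      map_add' := fun x y => by
        apply WithLp.ofLp_injective
        refine Prod.ext (WithLp.ofLp_injective 2 (Prod.ext ?_ ?_)) ?_ <;> simp
      map_smul' := fun r x => by
        apply WithLp.ofLp_injective
        refine Prod.ext (WithLp.ofLp_injective 2 (Prod.ext ?_ ?_)) ?_ <;> simp }
  let c₂ : H →ₗ[ℂ] WithLp 2 (WithLp 2 (H × H) × WithLp 2 (H × H)) :=
    { toFun := fun h => WithLp.toLp 2 (WithLp.toLp 2 (D₂ h, 0), 0)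
      map_add' := fun x y => by
        apply WithLp.ofLp_injective
        refine Prod.ext (WithLp.ofLp_injective 2 (Prod.ext ?_ ?_)) ?_ <;> simp
      map_smul' := fun r x => by
        apply WithLp.ofLp_injective
        refine Prod.ext (WithLp.ofLp_injective 2 (Prod.ext ?_ ?_)) ?_ <;> simp }
  refine exists_commuting_isometries T₁.toLinearMap T₂.toLinearMap hT c₁ c₂ P Q
    (fun a b => ?_) (fun a => ?_) (fun a => ?_) (fun a => ?_) (fun a => ?_) (fun a => ?_)
    (fun h => ?_) (fun h => ?_) (fun h => ?_) (fun h => ?_) G fun h => ?_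
  · simp only [WithLp.prod_norm_sq_eq]
    simp [P, Q]
    ring
  · apply WithLp.ofLp_injective
    refine Prod.ext (WithLp.ofLp_injective 2 (Prod.ext ?_ ?_)) ?_ <;> simp [P, Q]
  · rfl
  · rfl
  · rfl
  · rfl
  · rfl
  · rfl
  · simpa [WithLp.prod_norm_sq_eq, c₁] using hD₁ h
  · simpa [WithLp.prod_norm_sq_eq, c₂] using hD₂ h
  · have h₁ : c₂ h + c₁ (T₂ h) = WithLp.toLp 2 (A h, 0) := by
      apply WithLp.ofLp_injective
      refine Prod.ext (WithLp.ofLp_injective 2 (Prod.ext ?_ ?_)) ?_ <;> simp [c₁, c₂, hA]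
    have h₂ : c₁ h + c₂ (T₁ h) = WithLp.toLp 2 (B h, 0) := by
      apply WithLp.ofLp_injective
      refine Prod.ext (WithLp.ofLp_injective 2 (Prod.ext ?_ ?_)) ?_ <;> simp [c₁, c₂, hB]
    exact (congrArg G h₁).trans ((hG h).trans h₂.symm)

theorem tendsto_sub_of_re_inner {α E : Type*} [NormedAddCommGroup E] [InnerProductSpace ℂ E]
    {l : Filter α} {x : E} {y : α → E} (hy : ∀ i, ‖y i‖ = ‖x‖)
    (h : Tendsto (fun i => ⟪x, y i⟫_ℂ) l (𝓝 ⟪x, x⟫_ℂ)) : Tendsto y l (𝓝 x) := by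
  rw [tendsto_iff_norm_sub_tendsto_zero]
  have h1 : Tendsto (fun i => ‖y i - x‖ ^ 2) l (𝓝 0) := by
    have h2 := ((Complex.continuous_re.tendsto _).comp h).const_mul 2 |>.const_sub (2 * ‖x‖ ^ 2)
    have h3 : Complex.re ⟪x, x⟫_ℂ = ‖x‖ ^ 2 := inner_self_eq_norm_sq (𝕜 := ℂ) x
    rw [h3, sub_self] at h2
    refine h2.congr fun i => ?_
    rw [norm_sub_rev, @norm_sub_sq ℂ, hy]
    simp only [Function.comp_apply, RCLike.re_to_complex]
    ring
  simpa using (Real.continuous_sqrt.tendsto 0).comp h1 |>.congr fun i => Real.sqrt_sq (norm_nonneg _)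

theorem LinearIsometry.continuous_of_tendsto_zero {K : Type*} [NormedAddCommGroup K]
    [NormedSpace ℂ K] {V : ℝ≥0 → K →ₗᵢ[ℂ] K} (hV : ∀ s t x, V (s + t) x = V s (V t x)) {x : K}
    (hx : Tendsto (fun s => V s x) (𝓝 0) (𝓝 x)) : Continuous fun s => V s x := by
  have hadd : ∀ s d, ‖V (s + d) x - V s x‖ = ‖V d x - x‖ := fun s d => by
    rw [hV, ← map_sub, LinearIsometry.norm_map]
  have hdist : ∀ s t, ‖V s x - V t x‖ = ‖V (nndist s t) x - x‖ := by
    intro s t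
    rcases le_total s t with h | h
    · obtain ⟨d, rfl⟩ := exists_add_of_le h
      have : nndist s (s + d) = d := by
        ext
        simp [NNReal.dist_eq]
      rw [norm_sub_rev, hadd, this]
    · obtain ⟨d, rfl⟩ := exists_add_of_le h
      have : nndist (t + d) t = d := by
        ext
        simp [NNReal.dist_eq]
      rw [hadd, this]
  refine continuous_iff_continuousAt.2 fun t => ?_
  rw [ContinuousAt, tendsto_iff_norm_sub_tendsto_zero]
  have h1 : Tendsto (fun s => nndist s t) (𝓝 t) (𝓝 0) := by
    have : Continuous fun s : ℝ≥0 => nndist s t := by fun_prop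
    simpa using this.tendsto t
  simp only [hdist]
  exact (tendsto_iff_norm_sub_tendsto_zero.1 hx).comp h1

theorem LinearIsometry.tendsto_of_topologicalClosure_span_eq_top {α K : Type*}
    [NormedAddCommGroup K] [NormedSpace ℂ K] {l : Filter α} {V : α → K →ₗᵢ[ℂ] K} {D : Set K}
    (hD : (Submodule.span ℂ D).topologicalClosure = ⊤)
    (hV : ∀ x ∈ D, Tendsto (fun s => V s x) l (𝓝 x)) (x : K) :
    Tendsto (fun s => V s x) l (𝓝 x) := by
  have hspan : ∀ y ∈ Submodule.span ℂ D, Tendsto (fun s => V s y) l (𝓝 y) := by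
    intro y hy
    induction hy using Submodule.span_induction with
    | mem y hy => exact hV y hy
    | zero => simpa using tendsto_const_nhds
    | add y z _ _ hy hz => simpa using hy.add hz
    | smul c y _ hy => simpa using hy.const_smul c
  have hx : x ∈ closure (Submodule.span ℂ D : Set K) := by
    rw [← Submodule.topologicalClosure_coe, hD]
    trivial
  rw [Metric.tendsto_nhds]
  intro ε hε
  obtain ⟨y, hy, hxy⟩ := Metric.mem_closure_iff.1 hx (ε / 3) (by positivity)
  filter_upwards [Metric.tendsto_nhds.1 (hspan y hy) (ε / 3) (by positivity)] with s hs
  have h1 := dist_triangle4 (V s x) (V s y) y x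
  rw [(V s).dist_map, dist_comm y x] at h1
  linarith

theorem Nat.exists_floor_add_eq {a b : ℝ} (ha : 0 ≤ a) (hb : 0 ≤ b) :
    ∃ ε : ℕ, ε ≤ 1 ∧ ⌊a + b⌋₊ = ⌊a⌋₊ + ⌊b⌋₊ + ε := by
  have h₁ : ⌊a⌋₊ + ⌊b⌋₊ ≤ ⌊a + b⌋₊ := by
    apply Nat.le_floor
    push_cast
    linarith [Nat.floor_le ha, Nat.floor_le hb]
  have h₂ : ⌊a + b⌋₊ < ⌊a⌋₊ + ⌊b⌋₊ + 2 := by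
    rw [Nat.floor_lt (by positivity)]
    push_cast
    linarith [Nat.lt_floor_add_one a, Nat.lt_floor_add_one b]
  exact ⟨⌊a + b⌋₊ - (⌊a⌋₊ + ⌊b⌋₊), by omega, by omega⟩

theorem tendsto_floor_mul_succ_div {a : ℝ} (ha : 0 ≤ a) :
    Tendsto (fun n : ℕ => (⌊((n : ℝ) + 1) * a⌋₊ : ℝ) * (1 / ((n : ℝ) + 1))) atTop
      (𝓝[Set.Ici 0] a) := by
  refine tendsto_nhdsWithin_iff.2 ⟨?_, Eventually.of_forall fun n => ?_⟩
  · have h := (tendsto_nat_floor_mul_div_atTop ha).comp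
      (tendsto_atTop_add_const_right atTop (1 : ℝ) tendsto_natCast_atTop_atTop)
    refine h.congr fun n => ?_
    simp only [Function.comp_apply, mul_one_div, mul_comm a]
  · exact Set.mem_Ici.2 (by positivity)

theorem ContinuousLinearMap.semigroup_pow {H : Type*} [NormedAddCommGroup H]
    [InnerProductSpace ℂ H] {T : ℝ → H →L[ℂ] H} (hT₀ : T 0 = 1)
    (hT : ∀ s t : ℝ, 0 ≤ s → 0 ≤ t → T (s + t) = T s ∘L T t) {s : ℝ} (hs : 0 ≤ s) (n : ℕ) (x : H) :
    T (n * s) x = (T s)^[n] x := by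
  induction n with
  | zero => simp [hT₀]
  | succ n ih =>
    rw [Nat.cast_succ, add_mul, one_mul, add_comm, hT _ _ hs (by positivity), comp_apply, ih,
      Function.iterate_succ_apply']

theorem ContinuousLinearMap.tendsto_apply_apply {α H : Type*} [NormedAddCommGroup H]
    [InnerProductSpace ℂ H] {T₁ T₂ : ℝ → H →L[ℂ] H} (hT₁ : ∀ s : ℝ, 0 ≤ s → ‖T₁ s‖ ≤ 1)
    (hT₁c : ∀ x : H, ContinuousOn (fun s : ℝ => T₁ s x) (Set.Ici (0 : ℝ)))
    (hT₂c : ∀ x : H, ContinuousOn (fun s : ℝ => T₂ s x) (Set.Ici (0 : ℝ)))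
    {l : Filter α} {a b : α → ℝ} {s t : ℝ} (hs : 0 ≤ s) (ht : 0 ≤ t)
    (ha : Tendsto a l (𝓝[Set.Ici 0] s)) (hb : Tendsto b l (𝓝[Set.Ici 0] t)) (x : H) :
    Tendsto (fun i => T₁ (a i) (T₂ (b i) x)) l (𝓝 (T₁ s (T₂ t x))) := by
  have h₁ : Tendsto (fun i => T₁ (a i) (T₂ t x)) l (𝓝 (T₁ s (T₂ t x))) :=
    (hT₁c (T₂ t x) s hs).tendsto.comp ha
  have h₂ : Tendsto (fun i => T₂ (b i) x) l (𝓝 (T₂ t x)) := (hT₂c x t ht).tendsto.comp hb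
  have h₃ : Tendsto (fun i => T₁ (a i) (T₂ (b i) x) - T₁ (a i) (T₂ t x)) l (𝓝 0) := by
    refine squeeze_zero_norm' ?_ (tendsto_iff_norm_sub_tendsto_zero.1 h₂)
    filter_upwards [(tendsto_nhdsWithin_iff.1 ha).2] with i hi
    rw [← map_sub]
    simpa using (T₁ (a i)).le_of_opNorm_le (hT₁ _ hi) (T₂ (b i) x - T₂ t x)
  simpa using h₃.add h₁

theorem LinearIsometry.norm_pow_pow_sub_le {K : Type*} [NormedAddCommGroup K] [NormedSpace ℂ K]
    (V₁ V₂ : K →ₗᵢ[ℂ] K) (x : K) {ε δ : ℕ} (hε : ε ≤ 1) (hδ : δ ≤ 1) :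
    ‖(V₁ ^ ε) ((V₂ ^ δ) x) - x‖ ≤ ‖V₁ x - x‖ + ‖V₂ x - x‖ := by
  have h₁ : ‖(V₁ ^ ε) x - x‖ ≤ ‖V₁ x - x‖ := by
    interval_cases ε <;> simp
  have h₂ : ‖(V₂ ^ δ) x - x‖ ≤ ‖V₂ x - x‖ := by
    interval_cases δ <;> simp
  have h₃ := norm_sub_le_norm_sub_add_norm_sub ((V₁ ^ ε) ((V₂ ^ δ) x)) ((V₁ ^ ε) x) x
  rw [← map_sub, LinearIsometry.norm_map] at h₃
  linarith

theorem exists_dilation_semigroup {H : Type} [NormedAddCommGroup H] [InnerProductSpace ℂ H]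
    [CompleteSpace H] (T₁ T₂ : ℝ → H →L[ℂ] H)
    (hT₁contr : ∀ s : ℝ, 0 ≤ s → ‖T₁ s‖ ≤ 1)
    (hT₂contr : ∀ s : ℝ, 0 ≤ s → ‖T₂ s‖ ≤ 1)
    (hT₁0 : T₁ 0 = 1) (hT₂0 : T₂ 0 = 1)
    (hT₁sg : ∀ s t : ℝ, 0 ≤ s → 0 ≤ t → T₁ (s + t) = T₁ s ∘L T₁ t)
    (hT₂sg : ∀ s t : ℝ, 0 ≤ s → 0 ≤ t → T₂ (s + t) = T₂ s ∘L T₂ t)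
    (hT₁cont : ∀ x : H, ContinuousOn (fun s : ℝ => T₁ s x) (Set.Ici (0 : ℝ)))
    (hT₂cont : ∀ x : H, ContinuousOn (fun s : ℝ => T₂ s x) (Set.Ici (0 : ℝ)))
    (hcomm : ∀ s t : ℝ, 0 ≤ s → 0 ≤ t → T₁ s ∘L T₂ t = T₂ t ∘L T₁ s) :
    ∃ (K : Type) (_ : NormedAddCommGroup K) (_ : InnerProductSpace ℂ K) (_ : CompleteSpace K)
      (ι : H →ₗᵢ[ℂ] K) (V : ℝ≥0 × ℝ≥0 → K →ₗᵢ[ℂ] K),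
      V 0 = LinearIsometry.id ∧ (∀ p q, V (p + q) = (V p).comp (V q)) ∧
      (∀ p h h', ⟪ι h', V p (ι h)⟫_ℂ = ⟪h', T₁ p.1 (T₂ p.2 h)⟫_ℂ) ∧
      (Submodule.span ℂ {x : K | ∃ p h, x = V p (ι h)}).topologicalClosure = ⊤ := by
  have hstep : ∀ n : ℕ, (0 : ℝ) ≤ 1 / ((n : ℝ) + 1) := fun n => by positivity
  choose V₁ V₂ hV hV₁ hV₂ using fun n : ℕ => exists_ando_isometries
    (T₁ (1 / ((n : ℝ) + 1))) (T₂ (1 / ((n : ℝ) + 1))) (hT₁contr _ (hstep n)) (hT₂contr _ (hstep n))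
    fun h => DFunLike.congr_fun (hcomm _ _ (hstep n) (hstep n)) h
  have hVcomm : ∀ n, Commute (V₁ n) (V₂ n) := fun n => LinearIsometry.ext (hV n)
  let j : H →ₗᵢ[ℂ] AndoSpace H :=
    { toFun := fun h => WithLp.toLp 2 (h, 0)
      map_add' := fun x y => by
        rw [← WithLp.toLp_add, Prod.mk_add_mk, add_zero]
      map_smul' := fun r x => by
        simp [← WithLp.toLp_smul]
      norm_map' := fun h => by
        rw [← sq_eq_sq₀ (norm_nonneg _) (norm_nonneg _)]
        simp }
  have hj : ∀ h (k : AndoSpace H), ⟪j h, k⟫_ℂ = ⟪h, k.fst⟫_ℂ := by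
    intro h k
    simp [j, WithLp.prod_inner_apply]
  have hjfst : ∀ h, (j h).fst = h := fun h => rfl
  have hpow₁ : ∀ n (a : ℕ) k, ((V₁ n ^ a) k).fst = T₁ (a * (1 / ((n : ℝ) + 1))) k.fst := by
    intro n a k
    rw [semigroup_pow hT₁0 hT₁sg (hstep n), LinearIsometry.coe_pow]
    exact (Function.Semiconj.iterate_right (hV₁ n) a) k
  have hpow₂ : ∀ n (a : ℕ) k, ((V₂ n ^ a) k).fst = T₂ (a * (1 / ((n : ℝ) + 1))) k.fst := by
    intro n a k
    rw [semigroup_pow hT₂0 hT₂sg (hstep n), LinearIsometry.coe_pow]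
    exact (Function.Semiconj.iterate_right (hV₂ n) a) k
  let W : ℕ → ℝ≥0 × ℝ≥0 → AndoSpace H →ₗᵢ[ℂ] AndoSpace H := fun n p =>
    V₁ n ^ ⌊((n : ℝ) + 1) * p.1⌋₊ * V₂ n ^ ⌊((n : ℝ) + 1) * p.2⌋₊
  have hone : Tendsto (fun n : ℕ => 1 / ((n : ℝ) + 1)) atTop (𝓝[Set.Ici 0] 0) :=
    tendsto_nhdsWithin_iff.2 ⟨tendsto_one_div_add_atTop_nhds_zero_nat,
      Eventually.of_forall hstep⟩
  have hV₁j : ∀ h, Tendsto (fun n => ‖V₁ n (j h) - j h‖) atTop (𝓝 0) := by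
    intro h
    refine tendsto_iff_norm_sub_tendsto_zero.1 (tendsto_sub_of_re_inner (by simp) ?_)
    simp only [hj, hV₁, hjfst]
    refine tendsto_const_nhds.inner ?_
    simpa [hT₁0, Function.comp_def] using (hT₁cont h 0 Set.self_mem_Ici).tendsto.comp hone
  have hV₂j : ∀ h, Tendsto (fun n => ‖V₂ n (j h) - j h‖) atTop (𝓝 0) := by
    intro h
    refine tendsto_iff_norm_sub_tendsto_zero.1 (tendsto_sub_of_re_inner (by simp) ?_)
    simp only [hj, hV₂, hjfst]
    refine tendsto_const_nhds.inner ?_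
    simpa [hT₂0, Function.comp_def] using (hT₂cont h 0 Set.self_mem_Ici).tendsto.comp hone
  refine exists_isometric_dilation_of_tendsto j W (fun p h => T₁ p.1 (T₂ p.2 h)) (fun n => ?_)
    (fun p q h => ?_) (fun p h h' => ?_)
  · simp [W]
    rfl
  · refine squeeze_zero_norm (fun n => ?_) (by simpa using (hV₁j h).add (hV₂j h))
    obtain ⟨ε, hε, hε'⟩ := Nat.exists_floor_add_eq (a := ((n : ℝ) + 1) * p.1)
      (b := ((n : ℝ) + 1) * q.1) (by positivity) (by positivity)
    obtain ⟨δ, hδ, hδ'⟩ := Nat.exists_floor_add_eq (a := ((n : ℝ) + 1) * p.2)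
      (b := ((n : ℝ) + 1) * q.2) (by positivity) (by positivity)
    have hW : W n (p + q) = W n p * (W n q * (V₁ n ^ ε * V₂ n ^ δ)) := by
      simp only [W, Prod.fst_add, Prod.snd_add, NNReal.coe_add, mul_add, hε', hδ', pow_add]
      have hc : ∀ a b, V₂ n ^ a * V₁ n ^ b = V₁ n ^ b * V₂ n ^ a := fun a b =>
        ((hVcomm n).pow_pow b a).eq.symm
      have hc' : ∀ a b X, V₂ n ^ a * (V₁ n ^ b * X) = V₁ n ^ b * (V₂ n ^ a * X) := fun a b X => by
        rw [← mul_assoc, hc, mul_assoc]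
      simp only [mul_assoc, hc']
    rw [hW]
    change ‖W n p (W n q ((V₁ n ^ ε) ((V₂ n ^ δ) (j h)))) - W n p (W n q (j h))‖ ≤ _
    rw [← map_sub, ← map_sub, LinearIsometry.norm_map, LinearIsometry.norm_map]
    exact LinearIsometry.norm_pow_pow_sub_le _ _ _ hε hδ
  · have hWfst : ∀ n, (W n p (j h)).fst = T₁ (⌊((n : ℝ) + 1) * p.1⌋₊ * (1 / ((n : ℝ) + 1)))
        (T₂ (⌊((n : ℝ) + 1) * p.2⌋₊ * (1 / ((n : ℝ) + 1))) h) := by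
      intro n
      change ((V₁ n ^ _) ((V₂ n ^ _) (j h))).fst = _
      rw [hpow₁, hpow₂, hjfst]
    simp only [hj, hWfst]
    exact tendsto_const_nhds.inner (tendsto_apply_apply hT₁contr hT₁cont hT₂cont p.1.2 p.2.2
      (tendsto_floor_mul_succ_div p.1.2) (tendsto_floor_mul_succ_div p.2.2) h)

/-- **Słociński/Ptak theorem (continuous two-parameter Ando dilation).**
Two commuting strongly continuous one-parameter semigroups of contractions on a
complex Hilbert space `H` admit a minimal isometric dilation: a Hilbert space `K ⊇ H`
carrying two commuting strongly continuous semigroups of isometries compressing to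
`T₁(s)T₂(t)` on `H`. -/
theorem two_parameter_contraction_semigroup_isometric_dilation
    {H : Type} [NormedAddCommGroup H] [InnerProductSpace ℂ H] [CompleteSpace H]
    (T₁ T₂ : ℝ → H →L[ℂ] H)
    (hT₁contr : ∀ s : ℝ, 0 ≤ s → ‖T₁ s‖ ≤ 1)
    (hT₂contr : ∀ s : ℝ, 0 ≤ s → ‖T₂ s‖ ≤ 1)
    (hT₁0 : T₁ 0 = 1) (hT₂0 : T₂ 0 = 1)
    (hT₁sg : ∀ s t : ℝ, 0 ≤ s → 0 ≤ t → T₁ (s + t) = T₁ s ∘L T₁ t)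
    (hT₂sg : ∀ s t : ℝ, 0 ≤ s → 0 ≤ t → T₂ (s + t) = T₂ s ∘L T₂ t)
    (hT₁cont : ∀ x : H, ContinuousOn (fun s : ℝ => T₁ s x) (Set.Ici (0 : ℝ)))
    (hT₂cont : ∀ x : H, ContinuousOn (fun s : ℝ => T₂ s x) (Set.Ici (0 : ℝ)))
    (hcomm : ∀ s t : ℝ, 0 ≤ s → 0 ≤ t → T₁ s ∘L T₂ t = T₂ t ∘L T₁ s) :
    ∃ (K : Type) (_ : NormedAddCommGroup K) (_ : InnerProductSpace ℂ K)
      (_ : CompleteSpace K) (ι : H →L[ℂ] K) (V₁ V₂ : ℝ → K →L[ℂ] K),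
      -- `ι` is an isometric embedding of `H` into `K`
      (∀ h : H, ‖ι h‖ = ‖h‖) ∧
      -- `V₁`, `V₂` are one-parameter semigroups
      V₁ 0 = 1 ∧ V₂ 0 = 1 ∧
      (∀ s t : ℝ, 0 ≤ s → 0 ≤ t → V₁ (s + t) = V₁ s ∘L V₁ t) ∧
      (∀ s t : ℝ, 0 ≤ s → 0 ≤ t → V₂ (s + t) = V₂ s ∘L V₂ t) ∧
      -- consisting of isometries
      (∀ s : ℝ, 0 ≤ s → ∀ x : K, ‖V₁ s x‖ = ‖x‖) ∧
      (∀ s : ℝ, 0 ≤ s → ∀ x : K, ‖V₂ s x‖ = ‖x‖) ∧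
      -- strongly continuous
      (∀ x : K, ContinuousOn (fun s : ℝ => V₁ s x) (Set.Ici (0 : ℝ))) ∧
      (∀ x : K, ContinuousOn (fun s : ℝ => V₂ s x) (Set.Ici (0 : ℝ))) ∧
      -- commuting
      (∀ s t : ℝ, 0 ≤ s → 0 ≤ t → V₁ s ∘L V₂ t = V₂ t ∘L V₁ s) ∧
      -- dilation property: `T₁(s)T₂(t) = P_H V₁(s)V₂(t)|_H`
      (∀ s t : ℝ, 0 ≤ s → 0 ≤ t →
        T₁ s ∘L T₂ t = adjoint ι ∘L (V₁ s ∘L V₂ t) ∘L ι) ∧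
      -- minimality: `K = ⋁_{s,t ≥ 0} V₁(s)V₂(t)H`
      (Submodule.span ℂ {x : K | ∃ (s t : ℝ) (h : H),
          0 ≤ s ∧ 0 ≤ t ∧ x = V₁ s (V₂ t (ι h))}).topologicalClosure = ⊤ := by
  obtain ⟨K, _, _, _, ι, V, hV₀, hVadd, hVι, hVtop⟩ := exists_dilation_semigroup T₁ T₂ hT₁contr
    hT₂contr hT₁0 hT₂0 hT₁sg hT₂sg hT₁cont hT₂cont hcomm
  have hVadd' : ∀ p q x, V (p + q) x = V p (V q x) := fun p q x => by
    rw [hVadd]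
    rfl
  have hcont : ∀ f : ℝ≥0 → ℝ≥0 × ℝ≥0, (∀ s t, f (s + t) = f s + f t) →
      (∀ h, Tendsto (fun s => T₁ (f s).1 (T₂ (f s).2 h)) (𝓝 0) (𝓝 h)) →
      ∀ x, Continuous fun s => V (f s) x := by
    intro f hf hfT x
    refine LinearIsometry.continuous_of_tendsto_zero (V := fun s => V (f s))
      (fun s t x => by rw [hf, hVadd'])
      (LinearIsometry.tendsto_of_topologicalClosure_span_eq_top hVtop ?_ x)
    rintro _ ⟨p, h, rfl⟩
    have h₁ : Tendsto (fun s => V (f s) (ι h)) (𝓝 0) (𝓝 (ι h)) := by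
      refine tendsto_sub_of_re_inner (fun s => by simp) ?_
      simp only [hVι, LinearIsometry.inner_map_map]
      exact tendsto_const_nhds.inner (hfT h)
    refine (((V p).continuous.tendsto _).comp h₁).congr fun s => ?_
    rw [Function.comp_apply, ← hVadd', ← hVadd', add_comm]
  have hcoe : Tendsto (fun s : ℝ≥0 => (s : ℝ)) (𝓝 0) (𝓝[Set.Ici 0] 0) :=
    tendsto_nhdsWithin_iff.2 ⟨NNReal.continuous_coe.tendsto 0, Eventually.of_forall fun s => s.2⟩
  have hcont₁ : ∀ x, Continuous fun s => V (s, 0) x :=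
    hcont (fun s => (s, 0)) (fun s t => by simp) fun h => by
      simpa [hT₁0, hT₂0, Function.comp_def] using (hT₁cont h 0 Set.self_mem_Ici).tendsto.comp hcoe
  have hcont₂ : ∀ x, Continuous fun s => V (0, s) x :=
    hcont (fun s => (0, s)) (fun s t => by simp) fun h => by
      simpa [hT₁0, hT₂0, Function.comp_def] using (hT₂cont h 0 Set.self_mem_Ici).tendsto.comp hcoe
  have hV₁₂ : ∀ s t x, V (s, 0) (V (0, t) x) = V (s, t) x := fun s t x => by
    rw [← hVadd', Prod.mk_add_mk, add_zero, zero_add]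
  have hV₂₁ : ∀ s t x, V (0, t) (V (s, 0) x) = V (s, t) x := fun s t x => by
    rw [← hVadd', Prod.mk_add_mk, add_zero, zero_add]
  refine ⟨K, inferInstance, inferInstance, inferInstance, ι.toContinuousLinearMap,
    fun s => (V (s.toNNReal, 0)).toContinuousLinearMap,
    fun s => (V (0, s.toNNReal)).toContinuousLinearMap, ι.norm_map, ?_, ?_,
    fun s t hs ht => ?_, fun s t hs ht => ?_, fun s _ => (V _).norm_map, fun s _ => (V _).norm_map,
    fun x => ((hcont₁ x).comp continuous_real_toNNReal).continuousOn,
    fun x => ((hcont₂ x).comp continuous_real_toNNReal).continuousOn,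
    fun s t _ _ => ?_, fun s t hs ht => ?_, ?_⟩
  · ext x
    change V (Real.toNNReal 0, 0) x = x
    rw [Real.toNNReal_zero]
    exact DFunLike.congr_fun hV₀ x
  · ext x
    change V (0, Real.toNNReal 0) x = x
    rw [Real.toNNReal_zero]
    exact DFunLike.congr_fun hV₀ x
  · ext x
    change V ((s + t).toNNReal, 0) x = V (s.toNNReal, 0) (V (t.toNNReal, 0) x)
    rw [← hVadd', Prod.mk_add_mk, add_zero, Real.toNNReal_add hs ht]
  · ext x
    change V (0, (s + t).toNNReal) x = V (0, s.toNNReal) (V (0, t.toNNReal) x)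
    rw [← hVadd', Prod.mk_add_mk, add_zero, Real.toNNReal_add hs ht]
  · ext x
    exact (hV₁₂ _ _ x).trans (hV₂₁ _ _ x).symm
  · ext h
    refine ext_inner_left ℂ fun h' => ?_
    simp only [comp_apply, adjoint_inner_right]
    change _ = ⟪ι h', V (s.toNNReal, 0) (V (0, t.toNNReal) (ι h))⟫_ℂ
    rw [hV₁₂, hVι]
    simp [hs, ht]
  · refine top_unique (hVtop.ge.trans (Submodule.topologicalClosure_mono (Submodule.span_mono ?_)))
    rintro _ ⟨p, h, rfl⟩
    refine ⟨p.1, p.2, h, p.1.2, p.2.2, ?_⟩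
    change _ = V ((p.1 : ℝ).toNNReal, 0) (V (0, (p.2 : ℝ).toNNReal) (ι h))
    rw [hV₁₂, Real.toNNReal_coe, Real.toNNReal_coe]
end

section
/- Let Ω be a set and let Σ be a subsemigroup of ℝ₊^Ω (nonnegative real-valued functions on Ω under pointwise addition) containing 0 which is +,−-closed. Let V = {V_s}_{s∈Σ} be a semigroup of isometries on a complex Hilbert space K (V_0 = I and V_s V_t = V_{s+t}). Then there exist a Hilbert space L containing K (via an isometric embedding) and a semigroup of unitaries U = {U_s}_{s∈Σ} on L (U_0 = I, U_s U_t = U_{s+t}) which is a regular unitary dilation of V, i.e., P_K U_{s₋}* U_{s₊}|_K = V_{s₋}* V_{s₊} for all s ∈ Σ − Σ, and which is minimal in the sense that L is the closed linear span of {U_{s₋}* U_{s₊} k : s ∈ Σ − Σ, k ∈ K}. Moreover, the minimal regular unitary dilation is unique up to a unitary equivalence fixing K. -/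
open ContinuousLinearMap

/-- For `s : Ω → ℝ`, the positive part `s₊ : j ↦ max (s j) 0`. -/
noncomputable def posPart' {Ω : Type*} (s : Ω → ℝ) : Ω → ℝ := fun j => max (s j) 0

/-- For `s : Ω → ℝ`, the negative part `s₋ = s₊ - s`. -/
noncomputable def negPart' {Ω : Type*} (s : Ω → ℝ) : Ω → ℝ := posPart' s - s

open scoped InnerProductSpace

/-- Two total families with the same Gram matrix are related by a unitary. -/
theorem exists_linearIsometryEquiv_of_inner_eq {𝕜 X E F : Type*} [RCLike 𝕜]
    [NormedAddCommGroup E] [InnerProductSpace 𝕜 E] [CompleteSpace E]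
    [NormedAddCommGroup F] [InnerProductSpace 𝕜 F] [CompleteSpace F]
    {x : X → E} {y : X → F} (hxy : ∀ i j, ⟪x i, x j⟫_𝕜 = ⟪y i, y j⟫_𝕜)
    (hx : Dense (Submodule.span 𝕜 (Set.range x) : Set E))
    (hy : Dense (Submodule.span 𝕜 (Set.range y) : Set F)) :
    ∃ W : E ≃ₗᵢ[𝕜] F, ∀ i, W (x i) = y i := by
  have hx' : DenseRange (Finsupp.linearCombination 𝕜 x) := by
    rwa [← Finsupp.range_linearCombination] at hx
  have hy' : DenseRange (Finsupp.linearCombination 𝕜 y) := by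
    rwa [← Finsupp.range_linearCombination] at hy
  have hnorm (c : X →₀ 𝕜) :
      ‖Finsupp.linearCombination 𝕜 y c‖ = ‖Finsupp.linearCombination 𝕜 x c‖ := by
    simp only [@norm_eq_sqrt_re_inner 𝕜, Finsupp.linearCombination_apply, Finsupp.sum_inner,
      Finsupp.inner_sum, inner_smul_left, inner_smul_right, hxy]
  refine ⟨(LinearEquiv.refl 𝕜 (X →₀ 𝕜)).extendOfIsometry _ _ hx' hy' hnorm, fun i => ?_⟩
  simpa using LinearEquiv.extendOfIsometry_eq (LinearEquiv.refl 𝕜 (X →₀ 𝕜)) _ _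
    hx' hy' hnorm (Finsupp.single i 1)

/-- A norm-preserving continuous linear map preserves inner products. -/
theorem inner_apply_apply_of_norm_eq {𝕜 E F : Type*} [RCLike 𝕜]
    [NormedAddCommGroup E] [InnerProductSpace 𝕜 E] [NormedAddCommGroup F] [InnerProductSpace 𝕜 F]
    {T : E →L[𝕜] F} (hT : ∀ x, ‖T x‖ = ‖x‖) (x y : E) : ⟪T x, T y⟫_𝕜 = ⟪x, y⟫_𝕜 :=
  LinearIsometry.inner_map_map ⟨T.toLinearMap, hT⟩ x y

/-- The Gram kernel of the vectors `U_a* k` in a unitary extension of `V`. -/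
noncomputable def isometricSemigroupKernel {M K : Type*} [NormedAddCommGroup K]
    [InnerProductSpace ℂ K] [CompleteSpace K] (V : M → K →L[ℂ] K) : Matrix M M (K →L[ℂ] K) :=
  .of fun a b => adjoint (V b) ∘L V a

theorem inner_isometricSemigroupKernel {M K : Type*} [NormedAddCommGroup K]
    [InnerProductSpace ℂ K] [CompleteSpace K] (V : M → K →L[ℂ] K) (a b : M) (k l : K) :
    ⟪isometricSemigroupKernel V a b k, l⟫_ℂ = ⟪V a k, V b l⟫_ℂ := by
  simp [isometricSemigroupKernel, adjoint_inner_left]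

section UnitaryExtension

variable {M K L L' : Type*} [AddCommMonoid M]
  [NormedAddCommGroup K] [InnerProductSpace ℂ K]
  [NormedAddCommGroup L] [InnerProductSpace ℂ L] [CompleteSpace L]
  [NormedAddCommGroup L'] [InnerProductSpace ℂ L'] [CompleteSpace L']

/-- `U` is a semigroup of unitaries on `L ⊇ K` extending `V`, and `L` is the smallest subspace
containing `K` and reducing `U`. -/
structure IsMinimalUnitaryExtension (V : M → K →L[ℂ] K) (ι : K →L[ℂ] L) (U : M → L →L[ℂ] L) :
    Prop where
  norm_embed : ∀ x, ‖ι x‖ = ‖x‖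
  map_zero : U 0 = 1
  map_add : ∀ a b, U (a + b) = U a ∘L U b
  unitary : ∀ s, U s ∘L adjoint (U s) = 1 ∧ adjoint (U s) ∘L U s = 1
  apply_embed : ∀ s k, U s (ι k) = ι (V s k)
  dense : Dense (Submodule.span ℂ
    (Set.range fun p : M × K => adjoint (U p.1) (ι p.2)) : Set L)

namespace IsMinimalUnitaryExtension

variable {V : M → K →L[ℂ] K} {ι : K →L[ℂ] L} {U : M → L →L[ℂ] L}
  {ι' : K →L[ℂ] L'} {U' : M → L' →L[ℂ] L'}

theorem apply_adjoint (h : IsMinimalUnitaryExtension V ι U) (s : M) (x : L) :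
    U s (adjoint (U s) x) = x :=
  DFunLike.congr_fun (h.unitary s).1 x

theorem adjoint_apply (h : IsMinimalUnitaryExtension V ι U) (s : M) (x : L) :
    adjoint (U s) (U s x) = x :=
  DFunLike.congr_fun (h.unitary s).2 x

theorem comm (h : IsMinimalUnitaryExtension V ι U) (a b : M) (x : L) :
    U a (U b x) = U b (U a x) := by
  rw [← comp_apply, ← h.map_add, add_comm, h.map_add, comp_apply]

theorem inner_apply_apply (h : IsMinimalUnitaryExtension V ι U) (s : M) (x y : L) :
    ⟪U s x, U s y⟫_ℂ = ⟪x, y⟫_ℂ := by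
  rw [← adjoint_inner_right, h.adjoint_apply]

theorem inner_adjoint_embed (h : IsMinimalUnitaryExtension V ι U) (a b : M) (k l : K) :
    ⟪adjoint (U a) (ι k), adjoint (U b) (ι l)⟫_ℂ = ⟪V b k, V a l⟫_ℂ := by
  rw [← h.inner_apply_apply a, ← h.inner_apply_apply b, h.apply_adjoint, h.comm b a,
    h.apply_adjoint, h.apply_embed, h.apply_embed, inner_apply_apply_of_norm_eq h.norm_embed]

theorem apply_adjoint_embed (h : IsMinimalUnitaryExtension V ι U) (s a : M) (k : K) :
    U s (adjoint (U a) (ι k)) = adjoint (U a) (ι (V s k)) := by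
  rw [← h.adjoint_apply a (U s _), h.comm a s, h.apply_adjoint, h.apply_embed]

/-- Minimal unitary extensions are unique up to unitary equivalence. -/
theorem exists_linearIsometryEquiv (h : IsMinimalUnitaryExtension V ι U)
    (h' : IsMinimalUnitaryExtension V ι' U') :
    ∃ W : L ≃ₗᵢ[ℂ] L', (∀ k, W (ι k) = ι' k) ∧ ∀ s x, W (U s x) = U' s (W x) := by
  obtain ⟨W, hW⟩ := exists_linearIsometryEquiv_of_inner_eq
    (fun p q => (h.inner_adjoint_embed p.1 q.1 p.2 q.2).trans
      (h'.inner_adjoint_embed p.1 q.1 p.2 q.2).symm) h.dense h'.dense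
  have hW' (a : M) (k : K) : W (adjoint (U a) (ι k)) = adjoint (U' a) (ι' k) := hW (a, k)
  refine ⟨W, fun k => ?_, fun s x => ?_⟩
  · have := hW' 0 k
    rwa [h.map_zero, h'.map_zero, one_def, adjoint_id, one_def, adjoint_id] at this
  · have : (W.toContinuousLinearEquiv : L →L[ℂ] L') ∘L U s =
        U' s ∘L (W.toContinuousLinearEquiv : L →L[ℂ] L') := by
      refine ContinuousLinearMap.ext_on h.dense ?_
      rintro _ ⟨⟨a, k⟩, rfl⟩
      simp [h.apply_adjoint_embed, h'.apply_adjoint_embed, hW']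
    exact DFunLike.congr_fun this x

end IsMinimalUnitaryExtension

section Construction

variable {V : M → K →L[ℂ] K}

theorem inner_isometric_semigroup_add (hVadd : ∀ a b, V (a + b) = V a ∘L V b)
    (hViso : ∀ s x, ‖V s x‖ = ‖x‖) (a b s : M) (k l : K) :
    ⟪V b (V s k), V (a + s) l⟫_ℂ = ⟪V b k, V a l⟫_ℂ := by
  rw [← comp_apply, ← hVadd, add_comm b, add_comm a, hVadd, hVadd, comp_apply, comp_apply,
    inner_apply_apply_of_norm_eq (hViso s)]

variable [CompleteSpace K]

open scoped ComplexOrder in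
theorem posSemidef_isometricSemigroupKernel (hVadd : ∀ a b, V (a + b) = V a ∘L V b)
    (hViso : ∀ s x, ‖V s x‖ = ‖x‖) : (isometricSemigroupKernel V).PosSemidef := by
  classical
  have hiff := (RKHS.posSemidef_tfae (K := isometricSemigroupKernel V)).out 0 2
  refine hiff.mpr ⟨?_, fun f => ?_⟩
  · ext a b : 2
    simp [isometricSemigroupKernel, ContinuousLinearMap.star_eq_adjoint, adjoint_comp]
  · simp only [inner_isometricSemigroupKernel]
    let c (a : M) : M := ∑ x ∈ f.support.erase a, x
    have hc (a : M) (ha : a ∈ f.support) : c a + a = ∑ x ∈ f.support, x :=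
      Finset.sum_erase_add _ _ ha
    have key (a : M) (ha : a ∈ f.support) (b : M) (hb : b ∈ f.support) :
        ⟪V b (f a), V a (f b)⟫_ℂ = ⟪V (c a) (f a), V (c b) (f b)⟫_ℂ := by
      have h₁ : c a + c b + b = (∑ x ∈ f.support, x) + c a := by rw [← hc b hb]; abel
      have h₂ : c a + c b + a = (∑ x ∈ f.support, x) + c b := by rw [← hc a ha]; abel
      rw [← inner_apply_apply_of_norm_eq (hViso (c a + c b)) (V b _),
        ← inner_apply_apply_of_norm_eq (hViso (∑ x ∈ f.support, x)) (V (c a) _)]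
      simp only [← comp_apply, ← hVadd, h₁, h₂]
    have : (f.sum fun a k => f.sum fun b l => ⟪V b k, V a l⟫_ℂ) =
        ⟪∑ a ∈ f.support, V (c a) (f a), ∑ a ∈ f.support, V (c a) (f a)⟫_ℂ := by
      simp only [Finsupp.sum, sum_inner, inner_sum]
      rw [Finset.sum_comm]
      exact Finset.sum_congr rfl fun b hb => Finset.sum_congr rfl fun a ha => key a ha b hb
    rw [this]
    exact inner_self_nonneg

end Construction

/-- Every commutative semigroup of isometries has a minimal unitary extension. -/
theorem exists_isMinimalUnitaryExtension {M K : Type} [AddCommMonoid M] [NormedAddCommGroup K]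
    [InnerProductSpace ℂ K] [CompleteSpace K] {V : M → K →L[ℂ] K}
    (hV0 : V 0 = 1) (hVadd : ∀ a b, V (a + b) = V a ∘L V b) (hViso : ∀ s x, ‖V s x‖ = ‖x‖) :
    ∃ (L : Type) (_ : NormedAddCommGroup L) (_ : InnerProductSpace ℂ L) (_ : CompleteSpace L)
      (ι : K →L[ℂ] L) (U : M → L →L[ℂ] L), IsMinimalUnitaryExtension V ι U := by
  have : Fact (isometricSemigroupKernel V).PosSemidef :=
    ⟨posSemidef_isometricSemigroupKernel hVadd hViso⟩
  let L := RKHS.OfKernel (isometricSemigroupKernel V)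
  let γ : M → K →L[ℂ] L := RKHS.kerFun L
  have hγ (a b : M) (k l : K) : ⟪γ a k, γ b l⟫_ℂ = ⟪V b k, V a l⟫_ℂ := by
    rw [← RKHS.kernel_inner, RKHS.OfKernel.kernel_ofKernel, inner_isometricSemigroupKernel]
  have hdense : Dense (Submodule.span ℂ (Set.range fun p : M × K => γ p.1 p.2) : Set L) := by
    rw [Submodule.dense_iff_topologicalClosure_eq_top, ← RKHS.kerFun_dense L]
    congr 2
    ext x
    simp [γ]
  have hshift (a s : M) (k : K) : γ (a + s) (V s k) = γ a k := by
    have h (b : M) (l : K) : ⟪γ (a + s) (V s k) - γ a k, γ b l⟫_ℂ = 0 := by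
      rw [inner_sub_left, hγ, hγ, inner_isometric_semigroup_add hVadd hViso, sub_self]
    rw [← sub_eq_zero, ← @inner_self_eq_zero ℂ, inner_sub_right, h, h, sub_zero]
  have hcomm (a b : M) (k : K) : V a (V b k) = V b (V a k) := by
    rw [← comp_apply, ← hVadd, add_comm, hVadd, comp_apply]
  have hU (s : M) : ∃ W : L ≃ₗᵢ[ℂ] L, ∀ p : M × K, W (γ p.1 p.2) = γ p.1 (V s p.2) := by
    refine exists_linearIsometryEquiv_of_inner_eq (fun p q => ?_) hdense (hdense.mono ?_)
    · rw [hγ, hγ, hcomm q.1, hcomm p.1, inner_apply_apply_of_norm_eq (hViso s)]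
    · refine Submodule.span_mono ?_
      rintro _ ⟨⟨a, k⟩, rfl⟩
      exact ⟨(a + s, k), hshift a s k⟩
  choose W hW using hU
  have hW' (s a : M) (k : K) : W s (γ a k) = γ a (V s k) := hW s (a, k)
  let U (s : M) : L →L[ℂ] L := (W s).toContinuousLinearEquiv
  have hadj (s : M) : adjoint (U s) = ((W s).symm.toContinuousLinearEquiv : L →L[ℂ] L) :=
    (W s).adjoint_eq_symm
  have hadj' (a : M) (k : K) : adjoint (U a) (γ 0 k) = γ a k := by
    rw [hadj]
    refine (W a).symm_apply_eq.mpr ?_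
    rw [hW', ← hshift 0 a, zero_add]
  refine ⟨L, inferInstance, inferInstance, inferInstance, γ 0, U, ?_, ?_, ?_, ?_, ?_, ?_⟩
  · intro x
    rw [@norm_eq_sqrt_re_inner ℂ, hγ, hV0, one_def, id_apply, ← norm_eq_sqrt_re_inner]
  · refine ContinuousLinearMap.ext_on hdense ?_
    rintro _ ⟨⟨a, k⟩, rfl⟩
    simp [U, hW', hV0]
  · refine fun s t => ContinuousLinearMap.ext_on hdense ?_
    rintro _ ⟨⟨a, k⟩, rfl⟩
    simp [U, hW', hVadd]
  · intro s
    rw [hadj]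
    constructor <;> ext x <;> simp [U]
  · exact fun s k => hW' s 0 k
  · simpa only [hadj'] using hdense

end UnitaryExtension

section Dilation

theorem posPart'_of_nonneg {Ω : Type*} {s : Ω → ℝ} (hs : ∀ j, 0 ≤ s j) : posPart' s = s :=
  funext fun j => max_eq_left (hs j)

theorem negPart'_of_nonneg {Ω : Type*} {s : Ω → ℝ} (hs : ∀ j, 0 ≤ s j) : negPart' s = 0 := by
  rw [negPart', posPart'_of_nonneg hs, sub_self]

theorem posPart'_neg_of_nonneg {Ω : Type*} {s : Ω → ℝ} (hs : ∀ j, 0 ≤ s j) :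
    posPart' (-s) = 0 :=
  funext fun j => max_eq_right (neg_nonpos.mpr (hs j))

theorem negPart'_neg_of_nonneg {Ω : Type*} {s : Ω → ℝ} (hs : ∀ j, 0 ≤ s j) :
    negPart' (-s) = s := by
  rw [negPart', posPart'_neg_of_nonneg hs, zero_sub, neg_neg]

/-- If the compression of an isometry to `K` is isometric, then `K` is invariant. -/
theorem apply_embed_eq_of_compression_isometric {K L : Type*}
    [NormedAddCommGroup K] [InnerProductSpace ℂ K] [CompleteSpace K]
    [NormedAddCommGroup L] [InnerProductSpace ℂ L] [CompleteSpace L]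
    {ι : K →L[ℂ] L} {T : K →L[ℂ] K} {U : L →L[ℂ] L} (hι : ∀ x, ‖ι x‖ = ‖x‖)
    (hT : ∀ x, ‖T x‖ = ‖x‖) (hU : ∀ x, ‖U x‖ = ‖x‖) (h : adjoint ι ∘L U ∘L ι = T) (k : K) :
    U (ι k) = ι (T k) := by
  have h1 : ⟪U (ι k), ι (T k)⟫_ℂ = ⟪T k, T k⟫_ℂ := by
    rw [← adjoint_inner_left, ← h]; rfl
  rw [← sub_eq_zero, ← norm_eq_zero, ← sq_eq_zero_iff, @norm_sub_sq ℂ, h1, hU, hι, hι, hT,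
    inner_self_eq_norm_sq, hT]
  ring

variable {Ω K L : Type*} {S : AddSubmonoid (Ω → ℝ)}
  [NormedAddCommGroup K] [InnerProductSpace ℂ K]
  [NormedAddCommGroup L] [InnerProductSpace ℂ L] [CompleteSpace L]

/-- The vectors generating a minimal regular dilation, when `U` extends `V`. -/
theorem setOf_regular_dilation_vectors_eq_range (hnn : ∀ s ∈ S, ∀ j, 0 ≤ s j)
    (hpm : ∀ a ∈ S, ∀ b ∈ S, posPart' (a - b) ∈ S ∧ negPart' (a - b) ∈ S)
    {V : (Ω → ℝ) → K →L[ℂ] K} {ι : K →L[ℂ] L} {U : (Ω → ℝ) → L →L[ℂ] L}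
    (hU0 : U 0 = 1) (hUV : ∀ s ∈ S, ∀ k, U s (ι k) = ι (V s k)) :
    {x : L | ∃ a ∈ S, ∃ b ∈ S, ∃ k : K,
      x = adjoint (U (negPart' (a - b))) (U (posPart' (a - b)) (ι k))} =
    Set.range fun p : S × K => adjoint (U p.1) (ι p.2) := by
  ext x
  constructor
  · rintro ⟨a, ha, b, hb, k, rfl⟩
    exact ⟨(⟨_, (hpm a ha b hb).2⟩, V (posPart' (a - b)) k), by
      rw [hUV _ (hpm a ha b hb).1]⟩
  · rintro ⟨⟨⟨a, ha⟩, k⟩, rfl⟩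
    refine ⟨0, S.zero_mem, a, ha, k, ?_⟩
    rw [zero_sub, posPart'_neg_of_nonneg (hnn a ha), negPart'_neg_of_nonneg (hnn a ha), hU0]
    rfl

/-- A minimal regular unitary dilation of a semigroup of isometries is an extension. -/
theorem isMinimalUnitaryExtension_of_regular_dilation [CompleteSpace K]
    (hnn : ∀ s ∈ S, ∀ j, 0 ≤ s j)
    (hpm : ∀ a ∈ S, ∀ b ∈ S, posPart' (a - b) ∈ S ∧ negPart' (a - b) ∈ S)
    {V : (Ω → ℝ) → K →L[ℂ] K} (hV0 : V 0 = 1) (hViso : ∀ s ∈ S, ∀ x, ‖V s x‖ = ‖x‖)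
    {ι : K →L[ℂ] L} {U : (Ω → ℝ) → L →L[ℂ] L} (hι : ∀ x, ‖ι x‖ = ‖x‖) (hU0 : U 0 = 1)
    (hUadd : ∀ a ∈ S, ∀ b ∈ S, U (a + b) = U a ∘L U b)
    (hU : ∀ s ∈ S, U s ∘L adjoint (U s) = 1 ∧ adjoint (U s) ∘L U s = 1)
    (hdil : ∀ a ∈ S, ∀ b ∈ S,
      adjoint ι ∘L (adjoint (U (negPart' (a - b))) ∘L U (posPart' (a - b))) ∘L ι
        = adjoint (V (negPart' (a - b))) ∘L V (posPart' (a - b)))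
    (hmin : (Submodule.span ℂ {x : L | ∃ a ∈ S, ∃ b ∈ S, ∃ k : K,
      x = adjoint (U (negPart' (a - b))) (U (posPart' (a - b)) (ι k))}).topologicalClosure = ⊤) :
    IsMinimalUnitaryExtension (fun s : S => V s) ι (fun s : S => U s) := by
  have hUV (s : Ω → ℝ) (hs : s ∈ S) (k : K) : U s (ι k) = ι (V s k) := by
    refine apply_embed_eq_of_compression_isometric hι (hViso s hs)
      ((norm_map_iff_adjoint_comp_self (U s)).mpr (hU s hs).2) ?_ k
    have := hdil s hs 0 S.zero_mem
    rw [sub_zero, posPart'_of_nonneg (hnn s hs), negPart'_of_nonneg (hnn s hs), hU0, hV0,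
      one_def, one_def, adjoint_id, adjoint_id, id_comp, id_comp] at this
    exact this
  rw [setOf_regular_dilation_vectors_eq_range hnn hpm hU0 hUV,
    ← Submodule.dense_iff_topologicalClosure_eq_top] at hmin
  exact ⟨hι, hU0, fun a b => hUadd a a.2 b b.2, fun s => hU s s.2, fun s => hUV s s.2, hmin⟩

end Dilation

/-- **Minimal regular unitary dilation of a semigroup of isometries.**
Let `Sig` be a `+,-`-closed unital subsemigroup of `ℝ₊^Ω` and `V` a semigroup of
isometries over `Sig` on a complex Hilbert space `K`.  Then `V` admits a minimal
regular unitary dilation `U` on a Hilbert space `L ⊇ K`, unique up to a unitary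
equivalence fixing `K`. -/
theorem isometric_semigroup_has_unique_minimal_regular_unitary_dilation
    {Ω : Type} {K : Type} [NormedAddCommGroup K] [InnerProductSpace ℂ K]
    [CompleteSpace K]
    (Sig : Set (Ω → ℝ))
    (hnn : ∀ s ∈ Sig, ∀ j : Ω, 0 ≤ s j)
    (h0 : (0 : Ω → ℝ) ∈ Sig)
    (hadd : ∀ a ∈ Sig, ∀ b ∈ Sig, a + b ∈ Sig)
    (hpm : ∀ a ∈ Sig, ∀ b ∈ Sig, posPart' (a - b) ∈ Sig ∧ negPart' (a - b) ∈ Sig)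
    (V : (Ω → ℝ) → K →L[ℂ] K)
    (hV0 : V 0 = 1)
    (hVsg : ∀ a ∈ Sig, ∀ b ∈ Sig, V (a + b) = V a ∘L V b)
    (hViso : ∀ s ∈ Sig, ∀ x : K, ‖V s x‖ = ‖x‖) :
    ∃ (L : Type) (_ : NormedAddCommGroup L) (_ : InnerProductSpace ℂ L)
      (_ : CompleteSpace L) (ι : K →L[ℂ] L) (U : (Ω → ℝ) → L →L[ℂ] L),
      -- `ι` is an isometric embedding of `K` into `L`
      (∀ x : K, ‖ι x‖ = ‖x‖) ∧
      -- `U` is a semigroup over `Sig`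
      U 0 = 1 ∧
      (∀ a ∈ Sig, ∀ b ∈ Sig, U (a + b) = U a ∘L U b) ∧
      -- consisting of unitaries
      (∀ s ∈ Sig, U s ∘L adjoint (U s) = 1 ∧ adjoint (U s) ∘L U s = 1) ∧
      -- regular dilation: for `s = a - b ∈ Sig - Sig`, `P_K U_{s₋}* U_{s₊}|_K = V_{s₋}* V_{s₊}`
      (∀ a ∈ Sig, ∀ b ∈ Sig,
        adjoint ι ∘L (adjoint (U (negPart' (a - b))) ∘L U (posPart' (a - b))) ∘L ι
          = adjoint (V (negPart' (a - b))) ∘L V (posPart' (a - b))) ∧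
      -- minimality: `L = ⋁_{s ∈ Sig - Sig} U_{s₋}* U_{s₊} K`
      (Submodule.span ℂ {x : L | ∃ a ∈ Sig, ∃ b ∈ Sig, ∃ k : K,
          x = adjoint (U (negPart' (a - b)))
                (U (posPart' (a - b)) (ι k))}).topologicalClosure = ⊤ ∧
      -- uniqueness up to a unitary equivalence fixing `K`
      (∀ (L' : Type) (_ : NormedAddCommGroup L') (_ : InnerProductSpace ℂ L')
          (_ : CompleteSpace L') (ι' : K →L[ℂ] L') (U' : (Ω → ℝ) → L' →L[ℂ] L'),
        (∀ x : K, ‖ι' x‖ = ‖x‖) →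
        U' 0 = 1 →
        (∀ a ∈ Sig, ∀ b ∈ Sig, U' (a + b) = U' a ∘L U' b) →
        (∀ s ∈ Sig, U' s ∘L adjoint (U' s) = 1 ∧ adjoint (U' s) ∘L U' s = 1) →
        (∀ a ∈ Sig, ∀ b ∈ Sig,
          adjoint ι' ∘L (adjoint (U' (negPart' (a - b))) ∘L U' (posPart' (a - b))) ∘L ι'
            = adjoint (V (negPart' (a - b))) ∘L V (posPart' (a - b))) →
        (Submodule.span ℂ {x : L' | ∃ a ∈ Sig, ∃ b ∈ Sig, ∃ k : K,
            x = adjoint (U' (negPart' (a - b)))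
                  (U' (posPart' (a - b)) (ι' k))}).topologicalClosure = ⊤ →
        ∃ W : L ≃ₗᵢ[ℂ] L',
          (∀ k : K, W (ι k) = ι' k) ∧ ∀ s ∈ Sig, ∀ x : L, W (U s x) = U' s (W x)) := by
  let S : AddSubmonoid (Ω → ℝ) :=
    { carrier := Sig, zero_mem' := h0, add_mem' := fun ha hb => hadd _ ha _ hb }
  obtain ⟨L, _, _, _, ι, U₀, h⟩ := exists_isMinimalUnitaryExtension (V := fun s : S => V s)
    hV0 (fun a b => hVsg a a.2 b b.2) (fun s => hViso s s.2)
  classical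
  let U (s : Ω → ℝ) : L →L[ℂ] L := if hs : s ∈ S then U₀ ⟨s, hs⟩ else 1
  have hUS (s : S) : U s = U₀ s := dif_pos s.2
  have hU0 : U 0 = 1 := (hUS 0).trans h.map_zero
  have hUV (s : Ω → ℝ) (hs : s ∈ S) (k : K) : U s (ι k) = ι (V s k) := by
    rw [hUS ⟨s, hs⟩, h.apply_embed]
  refine ⟨L, inferInstance, inferInstance, inferInstance, ι, U, h.norm_embed, hU0, ?_, ?_, ?_,
    ?_, ?_⟩
  · intro a ha b hb
    rw [hUS ⟨a, ha⟩, hUS ⟨b, hb⟩, ← h.map_add]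
    exact hUS (⟨a, ha⟩ + ⟨b, hb⟩)
  · intro s hs
    rw [hUS ⟨s, hs⟩]
    exact h.unitary _
  · intro a ha b hb
    obtain ⟨hp, hn⟩ := hpm a ha b hb
    refine ContinuousLinearMap.ext fun k => ext_inner_right ℂ fun l => ?_
    simp only [comp_apply, adjoint_inner_left]
    rw [hUV _ hp, hUV _ hn, inner_apply_apply_of_norm_eq h.norm_embed]
  · refine (congrArg (fun A => (Submodule.span ℂ A).topologicalClosure)
      (setOf_regular_dilation_vectors_eq_range (S := S) hnn hpm hU0 hUV)).trans ?_
    rw [← Submodule.dense_iff_topologicalClosure_eq_top]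
    simpa only [hUS] using h.dense
  · intro L' _ _ _ ι' U' hι' hU0' hUadd' hU' hdil' hmin'
    obtain ⟨W, hWι, hWU⟩ := h.exists_linearIsometryEquiv
      (isMinimalUnitaryExtension_of_regular_dilation (S := S) hnn hpm hV0 hViso hι' hU0' hUadd'
        hU' hdil' hmin')
    refine ⟨W, hWι, fun s hs x => ?_⟩
    rw [hUS ⟨s, hs⟩, hWU]
end

section
/- Let Ω be a set, for each i ∈ Ω let S_i be a commensurable unital subsemigroup of ℝ₊, and let S be the semigroup of all finitely supported functions s : Ω → ℝ₊ with s(j) ∈ S_j for all j. Let T = {T_s}_{s∈S} be a doubly commuting semigroup of contractions on a complex Hilbert space H. Then T has a regular unitary dilation, and its minimal regular unitary dilation is a doubly commuting family. -/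
open ContinuousLinearMap

/-- A subset of `ℝ` is a commensurable unital subsemigroup of `ℝ₊` if it contains `0`,
is closed under addition, consists of nonnegative reals, and any finitely many of its
elements are natural multiples of a common element. -/
def IsCommensurableSubsemigroup (A : Set ℝ) : Prop :=
  0 ∈ A ∧ (∀ x ∈ A, ∀ y ∈ A, x + y ∈ A) ∧ (∀ x ∈ A, 0 ≤ x) ∧
    ∀ (N : ℕ) (f : Fin N → ℝ), (∀ k, f k ∈ A) →
      ∃ s₀ ∈ A, ∃ a : Fin N → ℕ, ∀ k, f k = (a k : ℝ) * s₀

/-- The semigroup `S = Σᵢ Sᵢ` of finitely supported functions `s : Ω → ℝ` with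
`s j ∈ S j` for every `j`. -/
def SumSemigroup {Ω : Type*} (S : Ω → Set ℝ) : Set (Ω → ℝ) :=
  {s | (Function.support s).Finite ∧ ∀ j, s j ∈ S j}

/-- `eFun i r`: the function supported at `i` with value `r` (the element `eᵢ(r)`). -/
def eFun {Ω : Type*} [DecidableEq Ω] (i : Ω) (r : ℝ) : Ω → ℝ :=
  fun j => if j = i then r else 0

open scoped InnerProductSpace

/-- An operator-valued kernel is positive if all its finite sections are positive. -/
def IsPositiveKernel {X H : Type*} [NormedAddCommGroup H] [InnerProductSpace ℂ H]
    (k : X → X → H →L[ℂ] H) : Prop :=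
  ∀ (s : Finset X) (h : X → H), 0 ≤ (∑ x ∈ s, ∑ y ∈ s, ⟪h x, k x y (h y)⟫_ℂ).re

theorem IsPositiveKernel.one {X H : Type*} [NormedAddCommGroup H] [InnerProductSpace ℂ H] :
    IsPositiveKernel fun _ _ : X => (1 : H →L[ℂ] H) := fun s h => by
  simp only [one_apply_eq_self, ← inner_sum, ← sum_inner]
  exact inner_self_nonneg (𝕜 := ℂ)

/-- If on finite sets `a` factors through operators commuting with the positive kernel `k`, then
the product kernel `a * k` is positive. -/
theorem IsPositiveKernel.mul_of_factorization {X H : Type*} [NormedAddCommGroup H]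
    [InnerProductSpace ℂ H] [CompleteSpace H] {a k : X → X → H →L[ℂ] H} (hk : IsPositiveKernel k)
    (ha : ∀ s : Finset X, ∃ (N : ℕ) (B : ℕ → X → H →L[ℂ] H),
      (∀ x ∈ s, ∀ y ∈ s, a x y = ∑ n ∈ Finset.range N, star (B n x) * B n y) ∧
      ∀ n, ∀ x ∈ s, ∀ y ∈ s, ∀ z ∈ s, Commute (B n x) (k y z)) :
    IsPositiveKernel fun x y => a x y * k x y := fun s h => by
  obtain ⟨N, B, hB, hcomm⟩ := ha s
  have heq : ∑ x ∈ s, ∑ y ∈ s, ⟪h x, (a x y * k x y) (h y)⟫_ℂ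
      = ∑ n ∈ Finset.range N, ∑ x ∈ s, ∑ y ∈ s, ⟪B n x (h x), k x y (B n y (h y))⟫_ℂ := by
    rw [Finset.sum_comm]
    simp_rw [Finset.sum_comm (s := Finset.range N)]
    rw [Finset.sum_comm]
    refine Finset.sum_congr rfl fun x hx => Finset.sum_congr rfl fun y hy => ?_
    rw [hB x hx y hy, Finset.sum_mul, sum_apply, inner_sum]
    refine Finset.sum_congr rfl fun n _ => ?_
    rw [mul_assoc, (hcomm n y hy x hx y hy).eq, star_eq_adjoint, mul_apply_eq_comp, adjoint_inner_right,
      mul_apply_eq_comp]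
  rw [heq, Complex.re_sum]
  exact Finset.sum_nonneg fun n _ => hk s fun x => B n x (h x)

/-- The Toeplitz kernel of a contraction `t` on natural numbers `≤ N` factors through operators
in the commutant of the commutant of `t` and `star t`. -/
theorem exists_toeplitz_factorization {H : Type*} [NormedAddCommGroup H]
    [InnerProductSpace ℂ H] [CompleteSpace H] (t : H →L[ℂ] H) (ht : ‖t‖ ≤ 1) (N : ℕ) :
    ∃ (M : ℕ) (B : ℕ → ℕ → H →L[ℂ] H),
      (∀ m ≤ N, ∀ n ≤ N, star t ^ (m - n) * t ^ (n - m)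
        = ∑ k ∈ Finset.range M, star (B k m) * B k n) ∧
      ∀ c, Commute t c → Commute (star t) c → ∀ k m, Commute (B k m) c := by
  set q := 1 - star t * t with hq
  have hq0 : 0 ≤ q := by
    rw [hq, sub_nonneg, ← CStarAlgebra.norm_le_one_iff_of_nonneg _ (star_mul_self_nonneg t),
      CStarRing.norm_star_mul_self]
    exact mul_le_one₀ ht (norm_nonneg _) ht
  set d := CFC.sqrt q with hd
  have hdd : star d * d = q := by
    rw [(CFC.sqrt_nonneg q).isSelfAdjoint.star_eq, CFC.sqrt_mul_sqrt_self q]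
  let B : ℕ → ℕ → H →L[ℂ] H := fun k m =>
    Nat.casesOn k (t ^ m) fun k => if k < m then d * t ^ (m - 1 - k) else 0
  have hle : ∀ m ≤ N, ∀ n, m ≤ n → t ^ (n - m)
      = ∑ k ∈ Finset.range (N + 1), star (B k m) * B k n := fun m hm n hmn => by
    have htel : ∑ k ∈ Finset.range N, star (B (k + 1) m) * B (k + 1) n
        = ∑ k ∈ Finset.range m,
          (star t ^ k * t ^ (k + (n - m)) - star t ^ (k + 1) * t ^ (k + 1 + (n - m))) := by
      rw [← Finset.sum_range_reflect _ m, ← Finset.sum_subset (Finset.range_mono hm)]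
      · refine Finset.sum_congr rfl fun k hk => ?_
        have hk := Finset.mem_range.1 hk
        have h1 : m - 1 - k + (n - m) = n - 1 - k := by omega
        simp only [B, if_pos hk, if_pos (hk.trans_le hmn), star_mul, star_pow]
        rw [mul_assoc, ← mul_assoc (star d), hdd, hq, h1, add_right_comm, h1, pow_succ, pow_succ']
        noncomm_ring
      · intro k _ hk
        simp only [Finset.mem_range] at hk
        simp [B, hk]
    rw [Finset.sum_range_succ', htel, Finset.sum_range_sub']
    simp [B, hmn]
  refine ⟨N + 1, B, fun m hm n hn => ?_, fun c hc hc' k m => ?_⟩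
  · rcases le_total m n with h | h
    · rw [Nat.sub_eq_zero_of_le h, pow_zero, one_mul, hle m hm n h]
    · rw [Nat.sub_eq_zero_of_le h, pow_zero, mul_one, ← star_pow, hle n hn m h, star_sum]
      simp
  · have hdc : Commute d c := by
      refine ((Commute.one_left c).sub_left (hc'.mul_left hc)).cfcₙ_nnreal _
    cases k with
    | zero => exact hc.pow_left m
    | succ k =>
      by_cases hk : k < m
      · simp only [B, if_pos hk]
        exact hdc.mul_left (hc.pow_left _)
      · simp only [B, if_neg hk, Commute.zero_left]

/-- Kolmogorov decomposition of a positive operator-valued kernel. -/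
theorem IsPositiveKernel.exists_kolmogorov {X H : Type} [NormedAddCommGroup H]
    [InnerProductSpace ℂ H] [CompleteSpace H] {k : X → X → H →L[ℂ] H}
    (hk : IsPositiveKernel k) (hsymm : ∀ x y, adjoint (k x y) = k y x) :
    ∃ (K : Type) (_ : NormedAddCommGroup K) (_ : InnerProductSpace ℂ K) (_ : CompleteSpace K)
      (e : (X →₀ H) →ₗ[ℂ] K), DenseRange e ∧
        ∀ f g, ⟪e f, e g⟫_ℂ = f.sum fun x u => g.sum fun y v => ⟪u, k x y v⟫_ℂ := by
  let c : PreInnerProductSpace.Core ℂ (X →₀ H) :=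
    { inner := fun f g => f.sum fun x u => g.sum fun y v => ⟪u, k x y v⟫_ℂ
      conj_inner_symm := fun f g => by
        simp only [Finsupp.sum, map_sum, inner_conj_symm]
        rw [Finset.sum_comm]
        refine Finset.sum_congr rfl fun x _ => Finset.sum_congr rfl fun y _ => ?_
        rw [← adjoint_inner_right, hsymm]
      re_inner_nonneg := fun f => hk f.support f
      add_left := fun f₁ f₂ g => Finsupp.sum_add_index' (by simp)
        fun x u v => by simp
      smul_left := fun f g r => by
        rw [Finsupp.sum_smul_index' (by simp)]
        simp only [Finsupp.sum, inner_smul_left, Finset.mul_sum] }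
  let _ : SeminormedAddCommGroup (X →₀ H) :=
    InnerProductSpace.Core.toSeminormedAddCommGroup (c := c)
  let _ : InnerProductSpace ℂ (X →₀ H) := InnerProductSpace.ofCore c
  refine ⟨UniformSpace.Completion (X →₀ H), inferInstance, inferInstance, inferInstance,
    (UniformSpace.Completion.toComplL (𝕜 := ℂ) (E := X →₀ H)).toLinearMap,
    UniformSpace.Completion.denseRange_coe, fun f g => ?_⟩
  exact UniformSpace.Completion.inner_coe f g

/-- Naimark dilation of a positive definite operator-valued function on an abelian group. -/
theorem exists_naimark_dilation {G H : Type} [AddCommGroup G] [NormedAddCommGroup H]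
    [InnerProductSpace ℂ H] [CompleteSpace H] (φ : G → H →L[ℂ] H) (hφ0 : φ 0 = 1)
    (hsymm : ∀ g, adjoint (φ g) = φ (-g)) (hφ : IsPositiveKernel fun x y => φ (y - x)) :
    ∃ (K : Type) (_ : NormedAddCommGroup K) (_ : InnerProductSpace ℂ K) (_ : CompleteSpace K)
      (ι : H →ₗᵢ[ℂ] K) (V : G → K ≃ₗᵢ[ℂ] K),
      (∀ a b x, V (a + b) x = V a (V b x)) ∧
      (∀ g u v, ⟪ι u, V g (ι v)⟫_ℂ = ⟪u, φ g v⟫_ℂ) ∧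
      (Submodule.span ℂ {x | ∃ g h, x = V g (ι h)}).topologicalClosure = ⊤ := by
  classical
  obtain ⟨K, i₁, i₂, i₃, e, he, hinner⟩ := hφ.exists_kolmogorov (by simp [hsymm])
  have hsingle : ∀ x y u v, ⟪e (Finsupp.single x u), e (Finsupp.single y v)⟫_ℂ
      = ⟪u, φ (y - x) v⟫_ℂ := fun x y u v => by simp [hinner]
  let shift : G → (G →₀ H) ≃ₗ[ℂ] (G →₀ H) := fun g => Finsupp.domLCongr (Equiv.addLeft g)
  have hshift : ∀ g x u, shift g (Finsupp.single x u) = Finsupp.single (g + x) u := fun g x u => by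
    simp [shift]
  have hnorm : ∀ g f, ‖e (shift g f)‖ = ‖e f‖ := fun g f => by
    rw [@norm_eq_sqrt_re_inner ℂ, @norm_eq_sqrt_re_inner ℂ]
    congr 2
    rw [hinner, hinner]
    simp only [shift, Finsupp.domLCongr_apply, Finsupp.domCongr_apply,
      Finsupp.sum_equivMapDomain, Equiv.coe_addLeft, add_sub_add_left_eq_sub]
  let V : G → K ≃ₗᵢ[ℂ] K := fun g => (shift g).extendOfIsometry e e he he (hnorm g)
  have hV : ∀ g x u, V g (e (Finsupp.single x u)) = e (Finsupp.single (g + x) u) := fun g x u => by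
    rw [← hshift]
    exact LinearEquiv.extendOfIsometry_eq _ _ _ he he (hnorm g) _
  have hspan : ∀ p : Submodule ℂ K, (∀ x u, e (Finsupp.single x u) ∈ p) →
      p.topologicalClosure = ⊤ := fun p hp => by
    rw [← Submodule.dense_iff_topologicalClosure_eq_top]
    refine he.mono ?_
    rintro _ ⟨f, rfl⟩
    rw [← f.sum_single, Finsupp.sum, map_sum]
    exact p.sum_mem fun x _ => hp _ _
  let ι : H →ₗᵢ[ℂ] K :=
    { toLinearMap := e ∘ₗ Finsupp.lsingle 0
      norm_map' := fun u => by
        change ‖e (Finsupp.single 0 u)‖ = ‖u‖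
        rw [@norm_eq_sqrt_re_inner ℂ, hsingle, sub_self, hφ0, one_apply_eq_self,
          ← norm_eq_sqrt_re_inner] }
  have hι : ∀ u, ι u = e (Finsupp.single 0 u) := fun u => rfl
  refine ⟨K, i₁, i₂, i₃, ι, V, fun a b => ?_, fun g u v => ?_, ?_⟩
  · have hle : LinearMap.eqLocus (V (a + b)).toLinearEquiv.toLinearMap
        ((V a).toLinearEquiv.toLinearMap ∘ₗ (V b).toLinearEquiv.toLinearMap) = ⊤ := by
      rw [← hspan _ fun x u => ?_]
      · refine (IsClosed.submodule_topologicalClosure_eq ?_).symm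
        exact isClosed_eq (V (a + b)).continuous ((V a).continuous.comp (V b).continuous)
      · simp [LinearMap.mem_eqLocus, hV, add_assoc]
    intro x
    exact (hle ▸ Submodule.mem_top : x ∈ LinearMap.eqLocus (V (a + b)).toLinearEquiv.toLinearMap
        ((V a).toLinearEquiv.toLinearMap ∘ₗ (V b).toLinearEquiv.toLinearMap))
  · rw [hι, hι, hV, hsingle]
    simp
  · refine hspan _ fun x u => Submodule.subset_span ⟨x, u, ?_⟩
    rw [hι, hV, add_zero]

section Commensurable

variable {A : Set ℝ}

theorem IsCommensurableSubsemigroup.natCast_mul_mem (hA : IsCommensurableSubsemigroup A) {r : ℝ}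
    (hr : r ∈ A) (n : ℕ) : (n : ℝ) * r ∈ A := by
  induction n with
  | zero => simpa using hA.1
  | succ n ih =>
    rw [Nat.cast_succ, add_one_mul]
    exact hA.2.1 _ ih _ hr

theorem IsCommensurableSubsemigroup.sum_mem (hA : IsCommensurableSubsemigroup A) {X : Type*}
    (s : Finset X) {f : X → ℝ} (hf : ∀ x ∈ s, f x ∈ A) : ∑ x ∈ s, f x ∈ A :=
  Finset.sum_induction f (· ∈ A) (fun x y hx hy => hA.2.1 x hx y hy) hA.1 hf

theorem IsCommensurableSubsemigroup.exists_common_divisor (hA : IsCommensurableSubsemigroup A)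
    {X : Type*} (s : Finset X) {f : X → ℝ} (hf : ∀ x ∈ s, f x ∈ A) :
    ∃ r ∈ A, ∃ m : X → ℕ, ∀ x ∈ s, f x = m x * r := by
  classical
  obtain ⟨r, hr, m, hm⟩ := hA.2.2.2 s.card (fun k => f (s.equivFin.symm k)) fun k => hf _ (by simp)
  refine ⟨r, hr, fun x => if h : x ∈ s then m (s.equivFin ⟨x, h⟩) else 0, fun x hx => ?_⟩
  simpa [hx] using hm (s.equivFin ⟨x, hx⟩)

theorem max_natCast_mul_sub {r : ℝ} (hr : 0 ≤ r) (m n : ℕ) :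
    max ((n : ℝ) * r - m * r) 0 = ((n - m : ℕ) : ℝ) * r := by
  rw [← sub_mul]
  rcases le_total m n with h | h
  · rw [Nat.cast_sub h, max_eq_left (mul_nonneg (sub_nonneg.2 (Nat.cast_le.2 h)) hr)]
  · rw [Nat.sub_eq_zero_of_le h, Nat.cast_zero, zero_mul,
      max_eq_right (mul_nonpos_of_nonpos_of_nonneg (sub_nonpos.2 (Nat.cast_le.2 h)) hr)]

theorem IsCommensurableSubsemigroup.max_sub_mem (hA : IsCommensurableSubsemigroup A) {a b : ℝ}
    (ha : a ∈ A) (hb : b ∈ A) : max (a - b) 0 ∈ A := by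
  obtain ⟨r, hr, m, hm⟩ := hA.exists_common_divisor Finset.univ (f := fun c : Bool => cond c a b)
    (by simp [ha, hb])
  have hma : a = m true * r := hm true (Finset.mem_univ _)
  have hmb : b = m false * r := hm false (Finset.mem_univ _)
  rw [hma, hmb, max_natCast_mul_sub (hA.2.2.1 r hr)]
  exact hA.natCast_mul_mem hr _

/-- The kernel of a one-parameter contraction semigroup over a commensurable semigroup factors,
on finite sets, through operators in the bicommutant of the semigroup and its adjoints. -/
theorem IsCommensurableSubsemigroup.exists_kernel_factorization {H : Type*} [NormedAddCommGroup H]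
    [InnerProductSpace ℂ H] [CompleteSpace H] (hA : IsCommensurableSubsemigroup A)
    (W : ℝ → H →L[ℂ] H) (hW0 : W 0 = 1) (hWadd : ∀ a ∈ A, ∀ b ∈ A, W (a + b) = W a * W b)
    (hWcontr : ∀ a ∈ A, ‖W a‖ ≤ 1) {X : Type*} (s : Finset X) (f : X → ℝ)
    (hf : ∀ x, ∃ a ∈ A, ∃ b ∈ A, f x = a - b) :
    ∃ (N : ℕ) (B : ℕ → X → H →L[ℂ] H),
      (∀ x ∈ s, ∀ y ∈ s, star (W (max (f x - f y) 0)) * W (max (f y - f x) 0)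
        = ∑ n ∈ Finset.range N, star (B n x) * B n y) ∧
      ∀ c, (∀ r ∈ A, Commute (W r) c ∧ Commute (star (W r)) c) → ∀ n x, Commute (B n x) c := by
  classical
  choose a ha b hb hab using hf
  have hmem : ∀ x ∈ s, f x + ∑ y ∈ s, b y ∈ A := fun x hx => by
    rw [hab, ← Finset.add_sum_erase s b hx, ← add_assoc, sub_add_cancel]
    exact hA.2.1 _ (ha x) _ (hA.sum_mem _ fun y _ => hb y)
  obtain ⟨r, hr, m, hm⟩ := hA.exists_common_divisor s hmem
  have hpow : ∀ n : ℕ, W (n * r) = W r ^ n := fun n => by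
    induction n with
    | zero => simpa using hW0
    | succ n ih =>
      rw [Nat.cast_succ, add_one_mul, hWadd _ (hA.natCast_mul_mem hr n) _ hr, ih, pow_succ]
  have hmax : ∀ x ∈ s, ∀ y ∈ s, W (max (f y - f x) 0) = W r ^ (m y - m x) := fun x hx y hy => by
    rw [← hpow, ← max_natCast_mul_sub (hA.2.2.1 r hr), ← hm x hx, ← hm y hy,
      add_sub_add_right_eq_sub]
  obtain ⟨N, B, hB, hcomm⟩ := exists_toeplitz_factorization (W r) (hWcontr r hr) (s.sup m)
  refine ⟨N, fun n x => B n (m x), fun x hx y hy => ?_, fun c hc n x => ?_⟩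
  · rw [hmax x hx y hy, hmax y hy x hx, star_pow]
    exact hB _ (Finset.le_sup hx) _ (Finset.le_sup hy)
  · exact hcomm c (hc r hr).1 (hc r hr).2 n _

end Commensurable

section SumSemigroup

variable {Ω : Type*} {S : Ω → Set ℝ}

theorem negPart'_apply (s : Ω → ℝ) (j : Ω) : negPart' s j = max (-s j) 0 := by
  rw [negPart', Pi.sub_apply, posPart', ← max_sub_sub_right, sub_self, zero_sub, max_comm]

theorem posPart'_neg (s : Ω → ℝ) : posPart' (-s) = negPart' s :=
  funext fun j => (negPart'_apply s j).symm

theorem negPart'_neg (s : Ω → ℝ) : negPart' (-s) = posPart' s := by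
  rw [← posPart'_neg, neg_neg]

theorem posPart'_zero : posPart' (0 : Ω → ℝ) = 0 :=
  funext fun _ => max_self 0

theorem negPart'_zero : negPart' (0 : Ω → ℝ) = 0 := by
  rw [← posPart'_neg, neg_zero, posPart'_zero]

theorem zero_mem_sumSemigroup (hS : ∀ i, IsCommensurableSubsemigroup (S i)) :
    (0 : Ω → ℝ) ∈ SumSemigroup S :=
  ⟨by simp, fun j => (hS j).1⟩

theorem add_mem_sumSemigroup (hS : ∀ i, IsCommensurableSubsemigroup (S i)) {a b : Ω → ℝ}
    (ha : a ∈ SumSemigroup S) (hb : b ∈ SumSemigroup S) : a + b ∈ SumSemigroup S :=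
  ⟨(ha.1.union hb.1).subset (Function.support_add a b), fun j => (hS j).2.1 _ (ha.2 j) _ (hb.2 j)⟩

theorem indicator_mem_sumSemigroup (hS : ∀ i, IsCommensurableSubsemigroup (S i)) {a : Ω → ℝ}
    (ha : a ∈ SumSemigroup S) (F : Set Ω) : F.indicator a ∈ SumSemigroup S := by
  refine ⟨ha.1.subset (by simp [Set.support_indicator]), fun j => ?_⟩
  by_cases hj : j ∈ F
  · simpa [hj] using ha.2 j
  · simpa [hj] using (hS j).1

theorem eFun_mem_sumSemigroup [DecidableEq Ω] (hS : ∀ i, IsCommensurableSubsemigroup (S i))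
    {i : Ω} {r : ℝ} (hr : r ∈ S i) : eFun i r ∈ SumSemigroup S := by
  refine ⟨(Set.finite_singleton i).subset fun j hj => ?_, fun j => ?_⟩
  · by_contra hji
    exact hj (if_neg hji)
  · by_cases hji : j = i
    · subst hji
      simpa [eFun] using hr
    · simpa [eFun, hji] using (hS j).1

theorem eFun_zero [DecidableEq Ω] (i : Ω) : eFun i 0 = 0 := by
  funext j
  simp [eFun]

theorem eFun_add [DecidableEq Ω] (i : Ω) (a b : ℝ) : eFun i (a + b) = eFun i a + eFun i b := by
  funext j
  by_cases hj : j = i <;> simp [eFun, hj]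

theorem indicator_insert_eq_eFun_add [DecidableEq Ω] {j : Ω} {F : Finset Ω} (hj : j ∉ F)
    (a : Ω → ℝ) : (↑(insert j F) : Set Ω).indicator a
      = eFun j (a j) + (F : Set Ω).indicator a := by
  funext k
  by_cases hk : k = j
  · subst hk
    simp [eFun, hj]
  · by_cases hkF : k ∈ F <;> simp [eFun, hk, hkF]

/-- The group `S - S` generated by the sum semigroup. -/
def differenceGroup (hS : ∀ i, IsCommensurableSubsemigroup (S i)) : AddSubgroup (Ω → ℝ) where
  carrier := {g | ∃ a ∈ SumSemigroup S, ∃ b ∈ SumSemigroup S, g = a - b}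
  zero_mem' := ⟨0, zero_mem_sumSemigroup hS, 0, zero_mem_sumSemigroup hS, by simp⟩
  add_mem' := by
    rintro _ _ ⟨a, ha, b, hb, rfl⟩ ⟨c, hc, d, hd, rfl⟩
    exact ⟨a + c, add_mem_sumSemigroup hS ha hc, b + d, add_mem_sumSemigroup hS hb hd,
      sub_add_sub_comm a b c d⟩
  neg_mem' := by
    rintro _ ⟨a, ha, b, hb, rfl⟩
    exact ⟨b, hb, a, ha, neg_sub a b⟩

theorem mem_differenceGroup (hS : ∀ i, IsCommensurableSubsemigroup (S i)) {a : Ω → ℝ}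
    (ha : a ∈ SumSemigroup S) : a ∈ differenceGroup hS :=
  ⟨a, ha, 0, zero_mem_sumSemigroup hS, (sub_zero a).symm⟩

theorem posPart'_mem_sumSemigroup (hS : ∀ i, IsCommensurableSubsemigroup (S i)) {g : Ω → ℝ}
    (hg : g ∈ differenceGroup hS) : posPart' g ∈ SumSemigroup S := by
  obtain ⟨a, ha, b, hb, rfl⟩ := hg
  refine ⟨(ha.1.union hb.1).subset fun j hj => ?_, fun j => (hS j).max_sub_mem (ha.2 j) (hb.2 j)⟩
  by_contra hj'
  simp only [Set.mem_union, Function.mem_support, not_or, not_not] at hj'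
  exact hj (by simp [posPart', hj'.1, hj'.2])

theorem negPart'_mem_sumSemigroup (hS : ∀ i, IsCommensurableSubsemigroup (S i)) {g : Ω → ℝ}
    (hg : g ∈ differenceGroup hS) : negPart' g ∈ SumSemigroup S := by
  rw [← posPart'_neg]
  exact posPart'_mem_sumSemigroup hS (neg_mem hg)

end SumSemigroup

section Positivity

variable {Ω : Type*} [DecidableEq Ω] {H : Type*} [NormedAddCommGroup H] [InnerProductSpace ℂ H]
  [CompleteSpace H] {S : Ω → Set ℝ} {T : (Ω → ℝ) → H →L[ℂ] H}

theorem commute_indicator_of_doublyCommuting (hS : ∀ i, IsCommensurableSubsemigroup (S i))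
    (hT0 : T 0 = 1)
    (hTsg : ∀ a ∈ SumSemigroup S, ∀ b ∈ SumSemigroup S, T (a + b) = T a ∘L T b)
    (hTdc : ∀ i j : Ω, i ≠ j → ∀ si ∈ S i, ∀ sj ∈ S j,
      T (eFun j sj) ∘L adjoint (T (eFun i si)) = adjoint (T (eFun i si)) ∘L T (eFun j sj))
    {a : Ω → ℝ} (ha : a ∈ SumSemigroup S) {j : Ω} {r : ℝ} (hr : r ∈ S j) (F : Finset Ω)
    (hj : j ∉ F) :
    Commute (T (eFun j r)) (T ((F : Set Ω).indicator a)) ∧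
      Commute (star (T (eFun j r))) (T ((F : Set Ω).indicator a)) := by
  induction F using Finset.induction_on with
  | empty =>
    rw [Finset.coe_empty, Set.indicator_empty', hT0]
    exact ⟨Commute.one_right _, Commute.one_right _⟩
  | insert i F hi ih =>
    obtain ⟨hij, hjF⟩ := not_or.1 (Finset.mem_insert.not.1 hj)
    have hei := eFun_mem_sumSemigroup hS (ha.2 i)
    have hej := eFun_mem_sumSemigroup hS hr
    rw [indicator_insert_eq_eFun_add hi, hTsg _ hei _ (indicator_mem_sumSemigroup hS ha _)]
    refine ⟨Commute.mul_right ?_ (ih hjF).1, Commute.mul_right ?_ (ih hjF).2⟩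
    · exact (hTsg _ hej _ hei).symm.trans ((congrArg T (add_comm _ _)).trans (hTsg _ hei _ hej))
    · exact (hTdc j i hij r hr _ (ha.2 i)).symm

theorem isPositiveKernel_of_doublyCommuting (hS : ∀ i, IsCommensurableSubsemigroup (S i))
    (hT0 : T 0 = 1)
    (hTsg : ∀ a ∈ SumSemigroup S, ∀ b ∈ SumSemigroup S, T (a + b) = T a ∘L T b)
    (hTcontr : ∀ s ∈ SumSemigroup S, ‖T s‖ ≤ 1)
    (hTdc : ∀ i j : Ω, i ≠ j → ∀ si ∈ S i, ∀ sj ∈ S j,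
      T (eFun j sj) ∘L adjoint (T (eFun i si)) = adjoint (T (eFun i si)) ∘L T (eFun j sj)) :
    IsPositiveKernel fun x y : differenceGroup hS =>
      star (T (negPart' (y - x : Ω → ℝ))) * T (posPart' (y - x : Ω → ℝ)) := by
  have hpos : ∀ x y : differenceGroup hS, posPart' (y - x : Ω → ℝ) ∈ SumSemigroup S :=
    fun x y => posPart'_mem_sumSemigroup hS (y - x).2
  have hneg : ∀ x y : differenceGroup hS, negPart' (y - x : Ω → ℝ) ∈ SumSemigroup S :=
    fun x y => negPart'_mem_sumSemigroup hS (y - x).2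
  have hF : ∀ F : Finset Ω, IsPositiveKernel fun x y : differenceGroup hS =>
      star (T ((F : Set Ω).indicator (negPart' (y - x : Ω → ℝ))))
        * T ((F : Set Ω).indicator (posPart' (y - x : Ω → ℝ))) := fun F => by
    induction F using Finset.induction_on with
    | empty =>
      simp_rw [Finset.coe_empty, Set.indicator_empty', hT0, star_one, mul_one]
      exact IsPositiveKernel.one
    | insert j F hj ih =>
      have hcomm : ∀ {a}, a ∈ SumSemigroup S → ∀ {r}, r ∈ S j →
          Commute (T (eFun j r)) (T ((F : Set Ω).indicator a)) ∧
            Commute (star (T (eFun j r))) (T ((F : Set Ω).indicator a)) := fun ha _ hr =>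
        commute_indicator_of_doublyCommuting hS hT0 hTsg hTdc ha hr F hj
      have hsplit : ∀ {a}, a ∈ SumSemigroup S → T ((↑(insert j F) : Set Ω).indicator a)
          = T (eFun j (a j)) * T ((F : Set Ω).indicator a) := fun ha => by
        rw [indicator_insert_eq_eFun_add hj]
        exact hTsg _ (eFun_mem_sumSemigroup hS (ha.2 j)) _ (indicator_mem_sumSemigroup hS ha _)
      have hprod : (fun x y : differenceGroup hS =>
          star (T ((↑(insert j F) : Set Ω).indicator (negPart' (y - x : Ω → ℝ))))
            * T ((↑(insert j F) : Set Ω).indicator (posPart' (y - x : Ω → ℝ))))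
          = fun x y : differenceGroup hS =>
            (star (T (eFun j (max ((x : Ω → ℝ) j - (y : Ω → ℝ) j) 0)))
              * T (eFun j (max ((y : Ω → ℝ) j - (x : Ω → ℝ) j) 0)))
            * (star (T ((F : Set Ω).indicator (negPart' (y - x : Ω → ℝ))))
              * T ((F : Set Ω).indicator (posPart' (y - x : Ω → ℝ)))) := by
        funext x y
        have hn : negPart' (y - x : Ω → ℝ) j = max ((x : Ω → ℝ) j - (y : Ω → ℝ) j) 0 := by
          rw [negPart'_apply, Pi.sub_apply, neg_sub]
        have hp : posPart' (y - x : Ω → ℝ) j = max ((y : Ω → ℝ) j - (x : Ω → ℝ) j) 0 := rfl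
        rw [hsplit (hneg x y), hsplit (hpos x y), star_mul, hn, hp]
        have h₁ := (hcomm (hneg x y) (hn ▸ (hneg x y).2 j)).1.star_star
        have h₂ := (hcomm (hneg x y) (hp ▸ (hpos x y).2 j)).2.star_right
        rw [← h₁.eq, mul_assoc, mul_assoc, ← mul_assoc (T (eFun _ _)) (star _), h₂.eq, mul_assoc]
      rw [hprod]
      refine ih.mul_of_factorization fun s => ?_
      obtain ⟨N, B, hB, hBcomm⟩ := (hS j).exists_kernel_factorization (fun r => T (eFun j r))
        (by rw [eFun_zero, hT0])
        (fun a ha b hb => by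
          rw [eFun_add]
          exact hTsg _ (eFun_mem_sumSemigroup hS ha) _ (eFun_mem_sumSemigroup hS hb))
        (fun a ha => hTcontr _ (eFun_mem_sumSemigroup hS ha)) s
        (fun x : differenceGroup hS => (x : Ω → ℝ) j) (by
          rintro ⟨_, a, ha, b, hb, rfl⟩
          exact ⟨a j, ha.2 j, b j, hb.2 j, rfl⟩)
      refine ⟨N, B, hB, fun n x _ y _ z _ => hBcomm _ (fun r hr => ?_) n x⟩
      have hp := hcomm (hpos y z) hr
      have hn := hcomm (hneg y z) hr
      refine ⟨Commute.mul_right ?_ hp.1, hn.1.star_star.mul_right hp.2⟩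
      simpa using hn.2.star_right
  intro s h
  have hfin : (⋃ x ∈ s, Function.support (x : Ω → ℝ)).Finite := by
    refine s.finite_toSet.biUnion fun x _ => ?_
    obtain ⟨_, a, ha, b, hb, rfl⟩ := x
    exact (ha.1.union hb.1).subset (Function.support_sub a b)
  refine (hF hfin.toFinset s h).trans_eq ?_
  congr 1
  refine Finset.sum_congr rfl fun x hx => Finset.sum_congr rfl fun y hy => ?_
  have hzero : ∀ j ∉ hfin.toFinset, (y - x : Ω → ℝ) j = 0 := fun j hj => by
    simp only [Set.Finite.mem_toFinset, Set.mem_iUnion, not_exists, Function.mem_support,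
      not_not] at hj
    simp [hj x hx, hj y hy]
  have hp : (hfin.toFinset : Set Ω).indicator (posPart' (y - x : Ω → ℝ))
      = posPart' (y - x : Ω → ℝ) := Set.indicator_eq_self.2 fun j hj => by
    by_contra hj'
    exact hj (by rw [posPart', hzero j hj', max_self])
  have hn : (hfin.toFinset : Set Ω).indicator (negPart' (y - x : Ω → ℝ))
      = negPart' (y - x : Ω → ℝ) := Set.indicator_eq_self.2 fun j hj => by
    by_contra hj'
    exact hj (by rw [negPart'_apply, hzero j hj', neg_zero, max_self])
  simp only [hp, hn]

end Positivity

/-- **Regular unitary dilation of a doubly commuting semigroup.**  A doubly commuting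
semigroup of contractions over `S = Σᵢ Sᵢ` (`Sᵢ` commensurable unital subsemigroups
of `ℝ₊`) has a regular unitary dilation, and its minimal regular unitary dilation is
a doubly commuting family. -/
theorem doubly_commuting_semigroup_has_doubly_commuting_minimal_regular_unitary_dilation
    {Ω : Type} [DecidableEq Ω] {H : Type} [NormedAddCommGroup H]
    [InnerProductSpace ℂ H] [CompleteSpace H]
    (S : Ω → Set ℝ) (hS : ∀ i, IsCommensurableSubsemigroup (S i))
    -- `T` is a semigroup of contractions on `H` over `SumSemigroup S`
    (T : (Ω → ℝ) → H →L[ℂ] H)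
    (hT0 : T 0 = 1)
    (hTsg : ∀ a ∈ SumSemigroup S, ∀ b ∈ SumSemigroup S, T (a + b) = T a ∘L T b)
    (hTcontr : ∀ s ∈ SumSemigroup S, ‖T s‖ ≤ 1)
    -- `T` doubly commutes
    (hTdc : ∀ i j : Ω, i ≠ j → ∀ si ∈ S i, ∀ sj ∈ S j,
      T (eFun j sj) ∘L adjoint (T (eFun i si))
        = adjoint (T (eFun i si)) ∘L T (eFun j sj)) :
    -- then `T` has a minimal regular unitary dilation which doubly commutes
    ∃ (K : Type) (_ : NormedAddCommGroup K) (_ : InnerProductSpace ℂ K)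
      (_ : CompleteSpace K) (ι : H →L[ℂ] K) (U : (Ω → ℝ) → K →L[ℂ] K),
      (∀ h : H, ‖ι h‖ = ‖h‖) ∧
      U 0 = 1 ∧
      (∀ a ∈ SumSemigroup S, ∀ b ∈ SumSemigroup S, U (a + b) = U a ∘L U b) ∧
      (∀ s ∈ SumSemigroup S, U s ∘L adjoint (U s) = 1 ∧ adjoint (U s) ∘L U s = 1) ∧
      -- regular dilation of `T`
      (∀ a ∈ SumSemigroup S, ∀ b ∈ SumSemigroup S,
        adjoint ι ∘L (adjoint (U (negPart' (a - b))) ∘L U (posPart' (a - b))) ∘L ι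
          = adjoint (T (negPart' (a - b))) ∘L T (posPart' (a - b))) ∧
      -- minimality
      (Submodule.span ℂ {x : K | ∃ a ∈ SumSemigroup S, ∃ b ∈ SumSemigroup S,
          ∃ h : H, x = adjoint (U (negPart' (a - b)))
            (U (posPart' (a - b)) (ι h))}).topologicalClosure = ⊤ ∧
      -- the dilation is a doubly commuting family
      (∀ i j : Ω, i ≠ j → ∀ si ∈ S i, ∀ sj ∈ S j,
        U (eFun j sj) ∘L adjoint (U (eFun i si))
          = adjoint (U (eFun i si)) ∘L U (eFun j sj)) := by
  set φ : differenceGroup hS → H →L[ℂ] H :=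
    fun g => star (T (negPart' (g : Ω → ℝ))) * T (posPart' (g : Ω → ℝ)) with hφ
  obtain ⟨K, i₁, i₂, i₃, ι, V, hVadd, hVφ, hspan⟩ := exists_naimark_dilation φ
    (by simp [hφ, posPart'_zero, negPart'_zero, hT0])
    (fun g => by
      rw [← star_eq_adjoint]
      simp [hφ, posPart'_neg, negPart'_neg])
    (isPositiveKernel_of_doublyCommuting hS hT0 hTsg hTcontr hTdc)
  have hV0 : ∀ x, V 0 x = x := fun x => (V 0).injective (by rw [← hVadd, add_zero])
  have hVsymm : ∀ g x, (V g).symm x = V (-g) x := fun g x => by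
    rw [LinearIsometryEquiv.symm_apply_eq, ← hVadd, add_neg_cancel, hV0]
  classical
  let U : (Ω → ℝ) → K →L[ℂ] K := fun s =>
    if h : s ∈ differenceGroup hS then ((V ⟨s, h⟩ : K ≃L[ℂ] K) : K →L[ℂ] K) else 1
  have hU : ∀ g : differenceGroup hS, ∀ x, U g x = V g x := fun g x => by simp [U]
  have hUadj : ∀ g : differenceGroup hS, ∀ x, adjoint (U g) x = V (-g) x := fun g x => by
    refine ext_inner_left ℂ fun y => ?_
    rw [adjoint_inner_right, hU, ← hVsymm, LinearIsometryEquiv.inner_map_eq_flip]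
  have hreg : ∀ g : differenceGroup hS, ∀ x,
      adjoint (U (negPart' (g : Ω → ℝ))) (U (posPart' (g : Ω → ℝ)) x) = V g x := fun g x => by
    have hp := mem_differenceGroup hS (posPart'_mem_sumSemigroup hS g.2)
    have hn := mem_differenceGroup hS (negPart'_mem_sumSemigroup hS g.2)
    rw [hU ⟨_, hp⟩, hUadj ⟨_, hn⟩, ← hVadd]
    congr 2
    exact Subtype.ext (by simp [negPart'])
  have hmem : ∀ {a}, a ∈ SumSemigroup S → a ∈ differenceGroup hS := mem_differenceGroup hS
  refine ⟨K, i₁, i₂, i₃, ι.toContinuousLinearMap, U, ι.norm_map, ?_, fun a ha b hb => ?_,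
    fun s hs => ⟨?_, ?_⟩, fun a ha b hb => ?_, ?_, fun i j _ si hsi sj hsj => ?_⟩
  · ext x
    exact (hU 0 x).trans (hV0 x)
  · ext x
    rw [comp_apply, hU ⟨b, hmem hb⟩, hU ⟨a, hmem ha⟩, ← hVadd]
    exact hU (⟨a, hmem ha⟩ + ⟨b, hmem hb⟩) x
  · ext x
    rw [comp_apply, hUadj ⟨s, hmem hs⟩, hU ⟨s, hmem hs⟩, ← hVadd, add_neg_cancel, hV0,
      one_apply_eq_self]
  · ext x
    rw [comp_apply, hU ⟨s, hmem hs⟩, hUadj ⟨s, hmem hs⟩, ← hVadd, neg_add_cancel, hV0,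
      one_apply_eq_self]
  · ext x
    refine ext_inner_left ℂ fun y => ?_
    have hab : a - b ∈ differenceGroup hS := ⟨a, ha, b, hb, rfl⟩
    rw [comp_apply, comp_apply, comp_apply, adjoint_inner_right, hreg ⟨a - b, hab⟩]
    exact hVφ ⟨a - b, hab⟩ y x
  · rw [← hspan]
    congr 2
    ext x
    constructor
    · rintro ⟨a, ha, b, hb, h, rfl⟩
      exact ⟨⟨a - b, a, ha, b, hb, rfl⟩, h, hreg ⟨a - b, a, ha, b, hb, rfl⟩ _⟩
    · rintro ⟨⟨_, a, ha, b, hb, rfl⟩, h, rfl⟩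
      exact ⟨a, ha, b, hb, h, (hreg ⟨a - b, a, ha, b, hb, rfl⟩ _).symm⟩
  · ext x
    have hi := hmem (eFun_mem_sumSemigroup hS hsi)
    have hj := hmem (eFun_mem_sumSemigroup hS hsj)
    rw [comp_apply, comp_apply, hUadj ⟨_, hi⟩, hU ⟨_, hj⟩, hU ⟨_, hj⟩, hUadj ⟨_, hi⟩, ← hVadd,
      ← hVadd, add_comm]
end
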